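/- arXiv:2202.06949 — 4 statements merged into one kernel-verified Lean document; each statement's English description precedes it below -/
import Mathlib

section
/- For every rational number α with 0 < α < 1 there exists a real constant c > 0 (depending only on α) such that for every positive integer n and every collection of n step-function probability measures μ_1, ..., μ_n on [0,1], there exist a natural number m with m ≤ (2 − c)·n (as real numbers) and a set A ⊆ [0,1] achievable with m cuts such that μ_i(A) = α for every i ∈ {1, ..., n}. -/
/-!
Call a ratio `α` good if, for some `c > 0`, any `n` finite atomless measures on `[0,1]` admit a
common set that has the fraction `α` of each of them and at most `(2 - c) * n` boundary points in
`(0,1)`. Counting boundary points rather than cuts makes three facts easy. The ratio `1` is good.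
If `α` is good, so is `1 - α`. If `α` is good and `p` is prime, then `α / p` is good: split a set of
ratio `α` equally into `p` parts with `(p - 1) * n` cuts; each cut is a boundary point of at most
two parts, so on average a part has at most `(2 - c / p) * n` boundary points. Since
`a / b = (1 - r / b) / q` when `b = q * a + r`, induction on the numerator shows that every rational
in `[0,1]` is good.

The equal splitting of `n` atomless measures into `p` parts with `(p - 1) * n` cuts follows by
compactness from a discrete version for weighted words. Suppose that the latter fails. For each word
with at most `N = (p - 1) * n` cuts, record which labels are overweight for which measure, and
average the overweight labels of one measure. This is a labelling of the words by `ZMod p` which is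
equivariant under rotation of the labels. The words, ordered by filling in blanks and filtered by
the number of cuts, form a contractible complex with an action of `ZMod p`: sweeping one label
across the line contracts it, at the price of one cut. As in the theorem of Dold, a comparison with
the periodic resolution of `ZMod p` shows that the labelling is nondegenerate in degree `N`: some
increasing chain of `N + 1` words with at most `N` cuts has distinct labels at consecutive words.
Along this chain the number of overweight labels, counted over all measures, would increase strictly
`N` times, but it takes only values from `1` to `N`.
-/

open MeasureTheory
open scoped ENNReal

/-- A step-function probability measure on `[0,1]`: a Borel probability measure on `ℝ`
that is absolutely continuous w.r.t. Lebesgue measure with a piecewise constant density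
supported in `[0,1]`. -/
def IsStepMeasure (μ : Measure ℝ) : Prop :=
  IsProbabilityMeasure μ ∧
  ∃ (n : ℕ) (a b : Fin n → ℝ) (c : Fin n → ℝ≥0∞),
    (∀ i, 0 ≤ a i ∧ b i ≤ 1) ∧
    μ = volume.withDensity
      (fun x => ∑ i, Set.indicator (Set.Ico (a i) (b i)) (fun _ => c i) x)

/-- `A ⊆ [0,1]` is achievable with `m` cuts: there are points
`0 = y_0 ≤ y_1 ≤ ... ≤ y_m ≤ y_{m+1} = 1` such that `A` is the union of some
subcollection of the `m+1` closed intervals determined by these points. -/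
def AchievableWithCuts (m : ℕ) (A : Set ℝ) : Prop :=
  ∃ y : Fin (m + 2) → ℝ, Monotone y ∧ y 0 = 0 ∧ y (Fin.last (m + 1)) = 1 ∧
    ∃ S : Finset (Fin (m + 1)), A = ⋃ i ∈ S, Set.Icc (y i.castSucc) (y i.succ)

namespace NecklaceSplitting

noncomputable section

/-! ### Chains of lists -/

section Chains

open Finsupp

variable {R X Y : Type*} [CommRing R]

lemma apply_mem_of_mem_supported {M : Type*} [AddCommGroup M] [Module R M] {S : Set X}
    {P : Submodule R M} {f : (X →₀ R) →ₗ[R] M} (h : ∀ x ∈ S, f (single x 1) ∈ P)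
    {c : X →₀ R} (hc : c ∈ supported R R S) : f c ∈ P := by
  rw [supported_eq_span_single] at hc
  exact (Submodule.span_le (p := P.comap f)).2 (Set.image_subset_iff.2 h) hc

lemma eq_of_mem_supported {M : Type*} [AddCommGroup M] [Module R M] {S : Set X}
    {f g : (X →₀ R) →ₗ[R] M} (h : ∀ x ∈ S, f (single x 1) = g (single x 1))
    {c : X →₀ R} (hc : c ∈ supported R R S) : f c = g c :=
  sub_eq_zero.1 <| (Submodule.mem_bot R).1 <|
    apply_mem_of_mem_supported (f := f - g) (P := ⊥) (fun x hx ↦ by simp [h x hx]) hc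

variable (R X) in
/-- Ordered simplicial chains on the vertex set `X`: a list of length `k + 1` is a simplex of
dimension `k`, and the empty list is the simplex of dimension `-1` of the augmented complex. -/
abbrev ListChain := List X →₀ R

/-- The simplicial cone with apex `x`. -/
def cone (x : X) : ListChain R X →ₗ[R] ListChain R X := lmapDomain R R (List.cons x)

@[simp]
lemma cone_single (x : X) (l : List X) (r : R) : cone x (single l r) = single (x :: l) r :=
  mapDomain_single

/-- The simplicial map on chains induced by a map of vertices. -/
def mapChain (f : X → Y) : ListChain R X →ₗ[R] ListChain R Y := lmapDomain R R (List.map f)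

@[simp]
lemma mapChain_single (f : X → Y) (l : List X) (r : R) :
    mapChain f (single l r) = single (l.map f) r :=
  mapDomain_single

lemma mapChain_cone (f : X → Y) (x : X) (c : ListChain R X) :
    mapChain f (cone x c) = cone (f x) (mapChain f c) := by
  induction c using Finsupp.induction_linear <;> simp_all

@[simp]
lemma mapChain_id (c : ListChain R X) : mapChain id c = c := by
  induction c using Finsupp.induction_linear <;> simp_all

lemma mapChain_comp {Z : Type*} (g : Y → Z) (f : X → Y) (c : ListChain R X) :
    mapChain (g ∘ f) c = mapChain g (mapChain f c) := by
  induction c using Finsupp.induction_linear <;> simp_all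

/-- The alternating sum of the faces of a simplex. -/
def faceSum : List X → ListChain R X
  | [] => 0
  | x :: l => single l 1 - cone x (faceSum l)

/-- The boundary operator of the augmented simplicial chain complex. -/
def boundary : ListChain R X →ₗ[R] ListChain R X := linearCombination R faceSum

@[simp]
lemma boundary_single_nil (r : R) : boundary (single ([] : List X) r) = 0 := by
  simp [boundary, faceSum]

lemma boundary_cone (x : X) (c : ListChain R X) :
    boundary (cone x c) = c - cone x (boundary c) := by
  induction c using Finsupp.induction_linear with
  | zero => simp
  | add c d hc hd => simp only [map_add, hc, hd]; abel
  | single l r => simp [boundary, faceSum, smul_sub]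

@[simp]
lemma boundary_single_cons (x : X) (l : List X) (r : R) :
    boundary (single (x :: l) r) = single l r - cone x (boundary (single l r)) := by
  rw [← cone_single, boundary_cone]

lemma boundary_mapChain (f : X → Y) (c : ListChain R X) :
    boundary (mapChain f c) = mapChain f (boundary c) := by
  induction c using Finsupp.induction_linear with
  | zero => simp
  | add c d hc hd => simp only [map_add, hc, hd]
  | single l r =>
    induction l with
    | nil => simp
    | cons x l ih => simp_all [mapChain_cone]

/-- The triangulated prism over a simplex, with bottom face its image under `f` and top face its
image under `g`. -/
def prismSum (f g : X → Y) : List X → ListChain R Y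
  | [] => 0
  | x :: l => cone (f x) (single ((x :: l).map g) 1 - prismSum f g l)

/-- The prism operator, a chain homotopy between the simplicial maps induced by `f` and `g`. -/
def prism (f g : X → Y) : ListChain R X →ₗ[R] ListChain R Y := linearCombination R (prismSum f g)

lemma prism_single_one (f g : X → Y) (l : List X) :
    prism f g (single l (1 : R)) = prismSum f g l := by
  simp [prism]

lemma prism_cone (f g : X → Y) (x : X) (c : ListChain R X) :
    prism f g (cone x c) = cone (f x) (mapChain g (cone x c) - prism f g c) := by
  induction c using Finsupp.induction_linear with
  | zero => simp
  | add c d hc hd => simp only [map_add, hc, hd, map_sub]; abel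
  | single l r => simp [prism, prismSum, smul_sub]

lemma boundary_prism_add_prism_boundary (f g : X → Y) (c : ListChain R X) :
    boundary (prism f g c) + prism f g (boundary c) = mapChain g c - mapChain f c := by
  induction c using Finsupp.induction_linear with
  | zero => simp
  | add c d hc hd =>
    simp only [map_add]
    rw [add_add_add_comm, hc, hd]
    abel
  | single l r =>
    induction l with
    | nil => simp [prism, prismSum]
    | cons x l ih =>
      rw [← eq_sub_iff_add_eq] at ih
      rw [← cone_single]
      simp only [boundary_cone, prism_cone, boundary_mapChain, mapChain_cone, map_sub, ih]
      abel

lemma prismSum_mem_supported [Preorder X] [Preorder Y] {f g : X → Y} (hf : Monotone f)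
    (hg : Monotone g) (hfg : f ≤ g) {l : List X} (hl : l.Pairwise (· ≤ ·)) :
    prismSum f g l ∈ supported R R {l' : List Y | l'.length = l.length + 1 ∧
      l'.Pairwise (· ≤ ·) ∧ ∀ y ∈ l', ∃ x ∈ l, y = f x ∨ y = g x} := by
  induction l with
  | nil => exact zero_mem _
  | cons x l ih =>
    obtain ⟨hxl, hl⟩ := List.pairwise_cons.1 hl
    have hcone : ∀ c ∈ supported R R {l' : List Y | l'.length = l.length + 1 ∧
        l'.Pairwise (· ≤ ·) ∧ ∀ y ∈ l', f x ≤ y ∧ ∃ z ∈ x :: l, y = f z ∨ y = g z},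
        cone (f x) c ∈ supported R R {l' : List Y | l'.length = l.length + 1 + 1 ∧
          l'.Pairwise (· ≤ ·) ∧ ∀ y ∈ l', ∃ z ∈ x :: l, y = f z ∨ y = g z} := by
      refine fun c hc ↦ apply_mem_of_mem_supported (fun l' hl' ↦ ?_) hc
      rw [cone_single]
      refine single_mem_supported R 1 ⟨by simp [hl'.1],
        List.pairwise_cons.2 ⟨fun y hy ↦ (hl'.2.2 y hy).1, hl'.2.1⟩, ?_⟩
      exact List.forall_mem_cons.2 ⟨⟨x, by simp⟩, fun y hy ↦ (hl'.2.2 y hy).2⟩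
    refine hcone _ (sub_mem (single_mem_supported R 1 ⟨by simp, ?_, ?_⟩)
      (supported_mono ?_ (ih hl)))
    · exact (List.pairwise_cons.2 ⟨hxl, hl⟩).map g fun _ _ h ↦ hg h
    · refine List.forall_mem_map.2 fun z hz ↦ ⟨(hfg x).trans (hg ?_), z, hz, Or.inr rfl⟩
      rcases List.mem_cons.1 hz with rfl | hz
      exacts [le_rfl, hxl z hz]
    · refine fun l' hl' ↦ ⟨hl'.1, hl'.2.1, fun y hy ↦ ?_⟩
      obtain ⟨z, hz, hyz⟩ := hl'.2.2 y hy
      refine ⟨(hf (hxl z hz)).trans ?_, z, List.mem_cons_of_mem x hz, hyz⟩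
      rcases hyz with rfl | rfl
      exacts [le_rfl, hfg z]

end Chains

/-! ### The periodic resolution of a cyclic group -/

section PeriodicDiff

variable {A : Type*} [Ring A] (p : ℕ) (t : A)

/-- The differentials of the periodic resolution of a cyclic group of order `p` with generator `t`:
`t - 1` in even degrees and the norm element `1 + t + ⋯ + t ^ (p - 1)` in odd degrees. -/
def periodicDiff (k : ℕ) : A := if Even k then t - 1 else ∑ i ∈ Finset.range p, t ^ i

variable {p t}

lemma periodicDiff_of_even {k : ℕ} (hk : Even k) : periodicDiff p t k = t - 1 := if_pos hk

lemma periodicDiff_of_not_even {k : ℕ} (hk : ¬Even k) :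
    periodicDiff p t k = ∑ i ∈ Finset.range p, t ^ i :=
  if_neg hk

lemma periodicDiff_succ_mul_periodicDiff (ht : t ^ p = 1) (k : ℕ) :
    periodicDiff p t (k + 1) * periodicDiff p t k = 0 := by
  by_cases hk : Even k
  · rw [periodicDiff_of_even hk, periodicDiff_of_not_even (by grind), geom_sum_mul, ht, sub_self]
  · rw [periodicDiff_of_not_even hk, periodicDiff_of_even (by grind), mul_geom_sum, ht, sub_self]

lemma periodicDiff_one (hp : (p : A) = 0) (k : ℕ) : periodicDiff p (1 : A) k = 0 := by
  simp [periodicDiff, hp]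

end PeriodicDiff

section PeriodicDiffEnd

variable {R M M' : Type*} [CommRing R] [AddCommGroup M] [Module R M] [AddCommGroup M']
  [Module R M'] {p : ℕ} {t : Module.End R M} {S : Submodule R M}

lemma periodicDiff_mem (hS : ∀ c ∈ S, t c ∈ S) (k : ℕ) {c : M} (hc : c ∈ S) :
    periodicDiff p t k c ∈ S := by
  have hpow : ∀ i, (t ^ i) c ∈ S := by
    intro i
    induction i with
    | zero => exact hc
    | succ i ih => exact pow_succ' t i ▸ hS _ ih
  by_cases hk : Even k
  · rw [periodicDiff_of_even hk]
    exact sub_mem (hS c hc) hc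
  · rw [periodicDiff_of_not_even hk, LinearMap.sum_apply]
    exact sum_mem fun i _ ↦ hpow i

lemma map_periodicDiff (hS : ∀ c ∈ S, t c ∈ S) {t' : Module.End R M'} {f : M →ₗ[R] M'}
    (hf : ∀ c ∈ S, f (t c) = t' (f c)) (k : ℕ) {c : M} (hc : c ∈ S) :
    f (periodicDiff p t k c) = periodicDiff p t' k (f c) := by
  have hpow : ∀ i, (t ^ i) c ∈ S ∧ f ((t ^ i) c) = (t' ^ i) (f c) := by
    intro i
    induction i with
    | zero => exact ⟨hc, rfl⟩
    | succ i ih =>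
      rw [pow_succ', pow_succ', Module.End.mul_apply, Module.End.mul_apply, ← ih.2]
      exact ⟨hS _ ih.1, hf _ ih.1⟩
  by_cases hk : Even k
  · simp [periodicDiff_of_even hk, hf c hc]
  · simp [periodicDiff_of_not_even hk, LinearMap.sum_apply, fun i ↦ (hpow i).2]

lemma map_periodicDiff_eq_zero [CharP R p] (hS : ∀ c ∈ S, t c ∈ S) {f : M →ₗ[R] M'}
    (hf : ∀ c ∈ S, f (t c) = f c) (k : ℕ) {c : M} (hc : c ∈ S) :
    f (periodicDiff p t k c) = 0 := by
  rw [map_periodicDiff (t' := 1) hS hf k hc, periodicDiff_one, LinearMap.zero_apply]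
  rw [← map_natCast (algebraMap R (Module.End R M')), CharP.cast_eq_zero, map_zero]

end PeriodicDiffEnd

section CyclicResolution

open Finsupp

variable {R : Type*} [CommRing R] {p : ℕ}

/-- Translation by `a` on the free module on `ZMod p`, that is, multiplication by the element `a`
of the group ring. -/
def translate (a : ZMod p) : Module.End R (ZMod p →₀ R) := lmapDomain R R (a + ·)

@[simp]
lemma translate_single (a b : ZMod p) (r : R) :
    translate a (single b r) = single (a + b) r :=
  mapDomain_single

lemma translate_translate (a b : ZMod p) (w : ZMod p →₀ R) :
    translate a (translate b w) = translate (a + b) w := by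
  induction w using Finsupp.induction_linear <;> simp_all [add_assoc]

@[simp]
lemma translate_zero (w : ZMod p →₀ R) : translate 0 w = w := by
  induction w using Finsupp.induction_linear <;> simp_all

lemma translate_one_pow (i : ℕ) :
    (translate 1 : Module.End R (ZMod p →₀ R)) ^ i = translate (i : ZMod p) := by
  induction i with
  | zero => exact LinearMap.ext fun w ↦ by simp
  | succ i ih => exact LinearMap.ext fun w ↦ by simp [pow_succ', ih, translate_translate, add_comm]

variable (R p) in
/-- The augmentation, the sum of all coefficients. -/
def augmentation : (ZMod p →₀ R) →ₗ[R] R := linearCombination R fun _ ↦ 1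

@[simp]
lemma augmentation_single (a : ZMod p) (r : R) : augmentation R p (single a r) = r := by
  simp [augmentation]

lemma augmentation_translate (a : ZMod p) (w : ZMod p →₀ R) :
    augmentation R p (translate a w) = augmentation R p w := by
  induction w using Finsupp.induction_linear <;> simp_all

/-- The differential of the periodic resolution of `ZMod p`, from degree `k + 1` to degree `k`. -/
abbrev cyclicDiff (k : ℕ) : Module.End R (ZMod p →₀ R) := periodicDiff p (translate 1) k

lemma cyclicDiff_translate (k : ℕ) (a : ZMod p) (w : ZMod p →₀ R) :
    cyclicDiff k (translate a w) = translate a (cyclicDiff k w) :=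
  (map_periodicDiff (S := ⊤) (f := (translate a : Module.End R _)) (fun _ _ ↦ Submodule.mem_top)
    (fun w _ ↦ by rw [translate_translate, translate_translate, add_comm]) k
    Submodule.mem_top).symm

lemma augmentation_cyclicDiff [CharP R p] (k : ℕ) (w : ZMod p →₀ R) :
    augmentation R p (cyclicDiff k w) = 0 :=
  map_periodicDiff_eq_zero (S := ⊤) (fun _ _ ↦ Submodule.mem_top)
    (fun w _ ↦ augmentation_translate 1 w) k Submodule.mem_top

/-- The contracting homotopy of the periodic resolution of `ZMod p`, from degree `k` to degree
`k + 1`. -/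
def cyclicContraction (k : ℕ) : Module.End R (ZMod p →₀ R) :=
  linearCombination R fun a ↦
    if Even k then ∑ j ∈ Finset.range a.val, single (j : ZMod p) 1
    else if a = -1 then single 0 1 else 0

lemma cyclicContraction_single_of_even {k : ℕ} (hk : Even k) (a : ZMod p) :
    cyclicContraction k (single a (1 : R)) =
      ∑ j ∈ Finset.range a.val, single (j : ZMod p) 1 := by
  simp [cyclicContraction, hk]

lemma cyclicContraction_single_of_not_even {k : ℕ} (hk : ¬Even k) (a : ZMod p) :
    cyclicContraction k (single a (1 : R)) = if a = -1 then single 0 1 else 0 := by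
  simp [cyclicContraction, hk]

lemma cyclicDiff_single_of_even {k : ℕ} (hk : Even k) (a : ZMod p) :
    cyclicDiff k (single a (1 : R)) = single (1 + a) 1 - single a 1 := by
  simp [periodicDiff_of_even hk]

lemma cyclicDiff_single_of_not_even {k : ℕ} (hk : ¬Even k) (a : ZMod p) :
    cyclicDiff k (single a (1 : R)) = ∑ i ∈ Finset.range p, single ((i : ZMod p) + a) 1 := by
  simp [periodicDiff_of_not_even hk, translate_one_pow, LinearMap.sum_apply]

lemma linearMap_ext_single {M : Type*} [AddCommGroup M] [Module R M]
    {f g : (ZMod p →₀ R) →ₗ[R] M} (h : ∀ a, f (single a 1) = g (single a 1)) : f = g :=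
  Finsupp.lhom_ext' fun a ↦ LinearMap.ext_ring (h a)

lemma cyclicContraction_single_zero {k : ℕ} (hk : Even k) (r : R) :
    cyclicContraction k (single (0 : ZMod p) r) = 0 := by
  simp [cyclicContraction, hk]

lemma le_add_one_of_natCast_eq_neg_one {j : ℕ} (h : (j : ZMod p) = -1) : p ≤ j + 1 :=
  Nat.le_of_dvd j.succ_pos <| (ZMod.natCast_eq_zero_iff _ _).1 <| by simp [h]

variable [NeZero p]

lemma sum_range_natCast_zmod {M : Type*} [AddCommMonoid M] (f : ZMod p → M) :
    ∑ i ∈ Finset.range p, f i = ∑ a, f a :=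
  Finset.sum_nbij' (fun i ↦ (i : ZMod p)) ZMod.val (by simp) (by simp [ZMod.val_lt])
    (fun i hi ↦ ZMod.val_cast_of_lt (Finset.mem_range.1 hi)) (by simp) (by simp)

lemma cyclicContraction_translate_one_sub_of_even {k : ℕ} (hk : Even k) (a : ZMod p) :
    cyclicContraction k (single (1 + a) 1 - single a (1 : R)) =
      single a 1 - if a = -1 then ∑ b, single b 1 else 0 := by
  rw [map_sub, cyclicContraction_single_of_even hk, cyclicContraction_single_of_even hk]
  have hlast : ∑ j ∈ Finset.range (a.val + 1), single (j : ZMod p) (1 : R) =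
      ∑ j ∈ Finset.range a.val, single (j : ZMod p) 1 + single a 1 := by
    rw [Finset.sum_range_succ, ZMod.natCast_zmod_val]
  split_ifs with ha
  · have hval : (-1 : ZMod p).val + 1 = p :=
      le_antisymm (ZMod.val_lt _) (le_add_one_of_natCast_eq_neg_one (ZMod.natCast_zmod_val _))
    subst ha
    rw [hval, sum_range_natCast_zmod fun j ↦ single j (1 : R)] at hlast
    simp [hlast]
  · have hlt : a.val + 1 < p := by
      refine lt_of_le_of_ne (ZMod.val_lt a) fun h ↦ ha (eq_neg_of_add_eq_zero_left ?_)
      have := congr_arg (Nat.cast : ℕ → ZMod p) h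
      simpa using this
    have hval : (1 + a).val = a.val + 1 := by
      rw [← ZMod.val_cast_of_lt hlt, Nat.cast_add_one, ZMod.natCast_zmod_val, add_comm]
    rw [hval, hlast]
    simp

lemma cyclicDiff_cyclicContraction_single_of_even {k : ℕ} (hk : Even k) (a : ZMod p) :
    cyclicDiff k (cyclicContraction k (single a (1 : R))) = single a 1 - single 0 1 := by
  rw [cyclicContraction_single_of_even hk, map_sum]
  simp_rw [cyclicDiff_single_of_even hk]
  have := Finset.sum_range_sub (fun j : ℕ ↦ single (j : ZMod p) (1 : R)) a.val
  simpa [add_comm] using this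

lemma cyclicDiff_zero_cyclicContraction_zero (w : ZMod p →₀ R) :
    cyclicDiff 0 (cyclicContraction 0 w) = w - single 0 (augmentation R p w) := by
  refine LinearMap.congr_fun (f := cyclicDiff 0 ∘ₗ cyclicContraction 0)
    (g := LinearMap.id - lsingle 0 ∘ₗ augmentation R p) (linearMap_ext_single fun a ↦ ?_) w
  simpa using cyclicDiff_cyclicContraction_single_of_even Even.zero a

lemma cyclicDiff_add_cyclicContraction (k : ℕ) (w : ZMod p →₀ R) :
    cyclicDiff (k + 1) (cyclicContraction (k + 1) w) + cyclicContraction k (cyclicDiff k w) =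
      w := by
  refine LinearMap.congr_fun (f := cyclicDiff (k + 1) ∘ₗ cyclicContraction (k + 1) +
    cyclicContraction k ∘ₗ cyclicDiff k) (g := LinearMap.id) (linearMap_ext_single fun a ↦ ?_) w
  by_cases hk : Even k
  · have hk' : ¬Even (k + 1) := by grind
    simp only [LinearMap.add_apply, LinearMap.comp_apply, LinearMap.id_apply,
      cyclicDiff_single_of_even hk, cyclicContraction_translate_one_sub_of_even hk,
      cyclicContraction_single_of_not_even hk']
    split_ifs with ha
    · rw [cyclicDiff_single_of_not_even hk']
      simp [sum_range_natCast_zmod fun j ↦ single j (1 : R)]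
    · simp
  · have hk' : Even (k + 1) := by grind
    simp only [LinearMap.add_apply, LinearMap.comp_apply, LinearMap.id_apply,
      cyclicDiff_cyclicContraction_single_of_even hk', cyclicDiff_single_of_not_even hk, map_sum,
      cyclicContraction_single_of_not_even hk]
    rw [sum_range_natCast_zmod fun j ↦ if j + a = -1 then single (0 : ZMod p) (1 : R) else 0]
    simp [← eq_sub_iff_add_eq]

lemma augmentation_eq_zero_of_cyclicDiff_eq_zero [CharP R p] {k : ℕ} {w : ZMod p →₀ R}
    (hw : cyclicDiff k w = 0) : augmentation R p w = 0 := by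
  rw [← cyclicDiff_add_cyclicContraction k w, hw, map_zero, add_zero, augmentation_cyclicDiff]

lemma cyclicContraction_cyclicContraction (k : ℕ) (w : ZMod p →₀ R) :
    cyclicContraction (k + 1) (cyclicContraction k w) = 0 := by
  refine LinearMap.congr_fun (f := cyclicContraction (k + 1) ∘ₗ cyclicContraction k) (g := 0)
    (linearMap_ext_single fun a ↦ ?_) w
  rw [LinearMap.comp_apply, LinearMap.zero_apply]
  by_cases hk : Even k
  · have hk' : ¬Even (k + 1) := by grind
    rw [cyclicContraction_single_of_even hk, map_sum]
    refine Finset.sum_eq_zero fun j hj ↦ ?_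
    rw [cyclicContraction_single_of_not_even hk', if_neg]
    intro h
    exact ((ZMod.val_lt a).trans_le (le_add_one_of_natCast_eq_neg_one h)).not_ge
      (Finset.mem_range.1 hj)
  · have hk' : Even (k + 1) := by grind
    rw [cyclicContraction_single_of_not_even hk]
    split_ifs <;> simp [cyclicContraction_single_zero hk']

end CyclicResolution

/-! ### The classifying map -/

section ClassifyingMap

open Finsupp

variable {R : Type*} [CommRing R] {p : ℕ}

variable (R) in
/-- The values on simplices of the equivariant chain map from the simplicial chains on `ZMod p` to
the periodic resolution: the cone with apex `a` goes to the translate by `a` of the contracting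
homotopy. -/
def classifyingSum : ℕ → List (ZMod p) → (ZMod p →₀ R)
  | _, [] => 0
  | 0, a :: _ => single a 1
  | k + 1, a :: l => translate a (cyclicContraction k (translate (-a) (classifyingSum k l)))

/-- The equivariant chain map, in degree `k`, from the simplicial chains on `ZMod p` to the periodic
resolution. -/
def classifyingMap (k : ℕ) : ListChain R (ZMod p) →ₗ[R] (ZMod p →₀ R) :=
  linearCombination R (classifyingSum R k)

@[simp]
lemma classifyingMap_single (k : ℕ) (l : List (ZMod p)) (r : R) :
    classifyingMap k (single l r) = r • classifyingSum R k l := by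
  simp [classifyingMap]

lemma classifyingMap_succ_cone (k : ℕ) (a : ZMod p) (c : ListChain R (ZMod p)) :
    classifyingMap (k + 1) (cone a c) =
      translate a (cyclicContraction k (translate (-a) (classifyingMap k c))) := by
  induction c using Finsupp.induction_linear <;> simp_all [classifyingSum]

lemma classifyingSum_map_add (k : ℕ) (a : ZMod p) (l : List (ZMod p)) :
    classifyingSum R k (l.map (a + ·)) = translate a (classifyingSum R k l) := by
  induction k generalizing l with
  | zero => cases l <;> simp [classifyingSum]
  | succ k ih => cases l <;> simp [classifyingSum, ih, translate_translate]

lemma classifyingMap_mapChain_add (k : ℕ) (a : ZMod p) (c : ListChain R (ZMod p)) :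
    classifyingMap k (mapChain (a + ·) c) = translate a (classifyingMap k c) := by
  induction c using Finsupp.induction_linear <;> simp_all [classifyingSum_map_add]

variable [NeZero p]

lemma classifyingMap_boundary_single (k : ℕ) {l : List (ZMod p)} (hl : l.length = k + 2) :
    classifyingMap k (boundary (single l (1 : R))) = cyclicDiff k (classifyingSum R (k + 1) l) := by
  induction k generalizing l with
  | zero =>
    obtain ⟨a, b, rfl⟩ := List.length_eq_two.1 hl
    simp [classifyingSum, cyclicDiff_translate, cyclicDiff_zero_cyclicContraction_zero]
  | succ k ih =>
    rcases l with - | ⟨a, l⟩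
    · simp at hl
    have hhtpy := cyclicDiff_add_cyclicContraction (R := R) (p := p) k
    simp only [← eq_sub_iff_add_eq] at hhtpy
    have hl' : l.length = k + 2 := by simpa using hl
    rw [boundary_single_cons, map_sub, classifyingMap_succ_cone, classifyingSum,
      cyclicDiff_translate, hhtpy, cyclicDiff_translate, ih hl']
    simp [translate_translate]

lemma classifyingSum_eq_zero_of_not_isChain {k : ℕ} {l : List (ZMod p)} (hl : l.length = k + 1)
    (hchain : ¬l.IsChain (· ≠ ·)) : classifyingSum R k l = 0 := by
  induction k generalizing l with
  | zero =>
    obtain ⟨a, rfl⟩ := List.length_eq_one_iff.1 hl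
    exact absurd (List.isChain_singleton a) hchain
  | succ k ih =>
    rcases l with - | ⟨a, - | ⟨b, l⟩⟩
    · simp at hl
    · simp at hl
    have hl' : (b :: l).length = k + 1 := by simpa using hl
    rw [List.isChain_cons_cons, not_and_or, not_not] at hchain
    rcases hchain with rfl | hchain
    · cases k <;>
        simp [classifyingSum, translate_translate, cyclicContraction_single_zero,
          cyclicContraction_cyclicContraction]
    · rw [classifyingSum, ih hl' hchain]
      simp

end ClassifyingMap

/-! ### Words -/

section Words

variable {α : Type*}

/-- A labelling of the cells `0, 1, 2, …` of a line in which some cells are left blank. Only an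
initial segment of the cells is ever relevant. -/
def Word (α : Type*) := ℕ → Option α

namespace Word

/-- `X ≤ Y` if `Y` arises from `X` by filling in blanks. -/
instance : Preorder (Word α) where
  le X Y := ∀ k a, X k = some a → Y k = some a
  le_refl _ _ _ h := h
  le_trans _ _ _ h h' k a ha := h' k a (h k a ha)

/-- Apply a map to all labels. -/
def relabel (f : α → α) (X : Word α) : Word α := fun k ↦ (X k).map f

lemma relabel_mono (f : α → α) : Monotone (relabel f) := by
  intro X Y h k a ha
  obtain ⟨b, hb, rfl⟩ := Option.map_eq_some_iff.1 ha
  exact Option.map_eq_some_iff.2 ⟨b, h k b hb, rfl⟩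

@[simp]
lemma relabel_id : relabel (id : α → α) = id :=
  funext₂ fun _ _ ↦ Option.map_id_apply

lemma relabel_comp (f g : α → α) : relabel (f ∘ g) = relabel f ∘ relabel g :=
  funext₂ fun X k ↦ (Option.map_map f g (X k)).symm

/-- Replace the content of the first `j` cells by the label `a`. -/
def sweep (a : α) (j : ℕ) (X : Word α) : Word α := fun k ↦ if k < j then some a else X k

/-- Replace the content of the first `j` cells by the label `a` and blank the next cell. -/
def gap (a : α) (j : ℕ) (X : Word α) : Word α := fun k ↦ if k = j then none else sweep a j X k

/-- The word with the label `a` in the cells `0, …, m`. -/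
def base (a : α) (m : ℕ) : Word α := sweep a (m + 1) fun _ ↦ none

lemma sweep_zero (a : α) : sweep a 0 = id := rfl

lemma sweep_mono (a : α) (j : ℕ) : Monotone (sweep a j) := by
  intro X Y h k b hb
  by_cases hk : k < j
  · simpa [sweep, hk] using hb
  · exact (if_neg hk).trans (h k b ((if_neg hk).symm.trans hb))

lemma gap_mono (a : α) (j : ℕ) : Monotone (gap a j) := by
  intro X Y h k b hb
  by_cases hk : k = j
  · simp [gap, hk] at hb
  · exact (if_neg hk).trans (sweep_mono a j h k b ((if_neg hk).symm.trans hb))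

lemma gap_le_sweep (a : α) (j : ℕ) : gap a j ≤ sweep a j := by
  intro X k b hb
  by_cases hk : k = j <;> simp_all [gap]

lemma gap_le_sweep_succ (a : α) (j : ℕ) : gap a j ≤ sweep a (j + 1) := by
  intro X k b hb
  simp only [gap, sweep] at hb ⊢
  grind

lemma base_le_sweep (a : α) (m : ℕ) (X : Word α) : base a m ≤ sweep a (m + 1) X :=
  sweep_mono a (m + 1) fun _ _ h ↦ nomatch h

section Contraction

variable {R : Type*} [CommRing R]

/-- A contraction of the complex of words onto the word `base a m`, which sweeps the label `a`
across the line. The words `sweep a j X` and `sweep a (j + 1) X` are not comparable, but both lie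
above `gap a j X`. -/
def contraction (a : α) (m : ℕ) : ListChain R (Word α) →ₗ[R] ListChain R (Word α) :=
  ∑ j ∈ Finset.range (m + 1), (prism (gap a j) (sweep a j) - prism (gap a j) (sweep a (j + 1))) +
    prism (fun _ ↦ base a m) (sweep a (m + 1))

lemma boundary_contraction_add_contraction_boundary (a : α) (m : ℕ) (c : ListChain R (Word α)) :
    boundary (contraction a m c) + contraction a m (boundary c) =
      c - mapChain (fun _ ↦ base a m) c := by
  have hstep (j : ℕ) :
      boundary (prism (gap a j) (sweep a j) c - prism (gap a j) (sweep a (j + 1)) c) +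
        (prism (gap a j) (sweep a j) (boundary c) -
          prism (gap a j) (sweep a (j + 1)) (boundary c)) =
      mapChain (sweep a j) c - mapChain (sweep a (j + 1)) c := by
    rw [map_sub, sub_add_sub_comm, boundary_prism_add_prism_boundary,
      boundary_prism_add_prism_boundary, sub_sub_sub_cancel_right]
  simp only [contraction, LinearMap.add_apply, LinearMap.sum_apply, LinearMap.sub_apply, map_add,
    map_sum]
  rw [add_add_add_comm, ← Finset.sum_add_distrib, Finset.sum_congr rfl fun j _ ↦ hstep j,
    Finset.sum_range_sub' fun j ↦ mapChain (sweep a j) c, boundary_prism_add_prism_boundary,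
    sweep_zero, mapChain_id, sub_add_sub_cancel]

end Contraction

variable [DecidableEq α]

/-- The cost of passing from a cell to the next one: a cell following a blank costs one cut
whatever its content, a blank following a label is free, and a change of label costs one cut. -/
def cost : Option α → Option α → ℕ
  | none, _ => 1
  | some _, none => 0
  | some a, some b => if a = b then 0 else 1

/-- The number of cuts of a word on the cells `0, …, m`. -/
def cuts (m : ℕ) (X : Word α) : ℕ := ∑ k ∈ Finset.range m, cost (X k) (X (k + 1))

lemma cost_le_one (a b : Option α) : cost a b ≤ 1 := by
  rcases a with - | a <;> rcases b with - | b <;> simp only [cost] <;> grind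

lemma cuts_relabel (m : ℕ) {f : α → α} (hf : f.Injective) (X : Word α) :
    cuts m (relabel f X) = cuts m X := by
  refine Finset.sum_congr rfl fun k _ ↦ ?_
  unfold relabel
  rcases X k with - | a <;> rcases X (k + 1) with - | b <;> simp [cost, hf.eq_iff]

lemma cuts_base (a : α) (m : ℕ) : cuts m (base a m) = 0 :=
  Finset.sum_eq_zero fun k hk ↦ by
    have : k < m := Finset.mem_range.1 hk
    simp [base, sweep, cost, this, this.trans (Nat.lt_succ_self m)]

lemma cuts_le_cuts_add_one {X Y : Word α} (i m : ℕ)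
    (h : ∀ k ≠ i, cost (Y k) (Y (k + 1)) ≤ cost (X k) (X (k + 1))) :
    cuts m Y ≤ cuts m X + 1 := by
  calc cuts m Y ≤ ∑ k ∈ Finset.range m, (cost (X k) (X (k + 1)) + if k = i then 1 else 0) := by
        refine Finset.sum_le_sum fun k _ ↦ ?_
        split_ifs with hk
        · exact (cost_le_one _ _).trans (Nat.le_add_left _ _)
        · exact h k hk
    _ ≤ cuts m X + 1 := by
        rw [Finset.sum_add_distrib, Finset.sum_ite_eq', ← cuts]
        grind

lemma cuts_sweep_le (a : α) (j m : ℕ) (X : Word α) : cuts m (sweep a j X) ≤ cuts m X + 1 := by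
  refine cuts_le_cuts_add_one (j - 1) m fun k hk ↦ ?_
  rcases lt_or_ge k j with hkj | hkj
  · simp [sweep, hkj, show k + 1 < j by lia, cost]
  · simp [sweep, hkj.not_gt, show ¬k + 1 < j by lia]

lemma cuts_gap_le (a : α) (j m : ℕ) (X : Word α) : cuts m (gap a j X) ≤ cuts m X + 1 := by
  refine cuts_le_cuts_add_one j m fun k hk ↦ ?_
  rcases lt_or_gt_of_ne hk with hkj | hkj
  · by_cases hk' : k + 1 = j
    · simp [gap, sweep, hk, hkj, hk', cost]
    · simp [gap, sweep, hk, hkj, hk', show k + 1 < j by lia, cost]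
  · simp [gap, sweep, hk, hkj.not_gt, show k + 1 ≠ j by lia, show ¬k + 1 < j by lia]

/-- The simplices of dimension `k` whose vertices form an increasing sequence of words with at most
`k` cuts. -/
def flags (α : Type*) [DecidableEq α] (m k : ℕ) : Set (List (Word α)) :=
  {l | l.length = k + 1 ∧ l.Pairwise (· ≤ ·) ∧ ∀ X ∈ l, cuts m X ≤ k}

lemma map_relabel_mem_flags {m k : ℕ} {f : α → α} (hf : f.Injective) {l : List (Word α)}
    (hl : l ∈ flags α m k) : l.map (relabel f) ∈ flags α m k := by
  refine ⟨by simp [hl.1], hl.2.1.map _ fun _ _ h ↦ relabel_mono f h, ?_⟩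
  exact List.forall_mem_map.2 fun X hX ↦ (cuts_relabel m hf X).trans_le (hl.2.2 X hX)

section Support

open Finsupp

variable {R : Type*} [CommRing R]

lemma prism_mem_supported_flags {f g : Word α → Word α} (hf : Monotone f) (hg : Monotone g)
    (hfg : f ≤ g) {m : ℕ} (hfm : ∀ X, cuts m (f X) ≤ cuts m X + 1)
    (hgm : ∀ X, cuts m (g X) ≤ cuts m X + 1) {k : ℕ} {c : ListChain R (Word α)}
    (hc : c ∈ supported R R (flags α m k)) :
    prism f g c ∈ supported R R (flags α m (k + 1)) := by
  refine apply_mem_of_mem_supported (fun l hl ↦ ?_) hc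
  rw [prism_single_one]
  refine supported_mono ?_ (prismSum_mem_supported hf hg hfg hl.2.1)
  rintro l' ⟨hlen, hpair, hmem⟩
  refine ⟨by rw [hlen, hl.1], hpair, fun Y hY ↦ ?_⟩
  obtain ⟨X, hX, rfl | rfl⟩ := hmem Y hY
  exacts [(hfm X).trans (Nat.succ_le_succ (hl.2.2 X hX)),
    (hgm X).trans (Nat.succ_le_succ (hl.2.2 X hX))]

lemma contraction_mem_supported_flags (a : α) (m : ℕ) {k : ℕ} {c : ListChain R (Word α)}
    (hc : c ∈ supported R R (flags α m k)) :
    contraction a m c ∈ supported R R (flags α m (k + 1)) := by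
  rw [contraction, LinearMap.add_apply, LinearMap.sum_apply]
  refine add_mem (sum_mem fun j _ ↦ sub_mem ?_ ?_) ?_
  · exact prism_mem_supported_flags (gap_mono a j) (sweep_mono a j) (gap_le_sweep a j)
      (cuts_gap_le a j m) (cuts_sweep_le a j m) hc
  · exact prism_mem_supported_flags (gap_mono a j) (sweep_mono a (j + 1)) (gap_le_sweep_succ a j)
      (cuts_gap_le a j m) (cuts_sweep_le a (j + 1) m) hc
  · exact prism_mem_supported_flags monotone_const (sweep_mono a (m + 1)) (base_le_sweep a m)
      (fun X ↦ by simp [cuts_base]) (cuts_sweep_le a (m + 1) m) hc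

end Support

end Word

end Words

/-! ### A Ky Fan lemma for words -/

section KyFan

open Finsupp Word

variable {R : Type*} [CommRing R] {p m : ℕ}

variable (R p) in
/-- The action of the generator of `ZMod p` on chains of words by rotation of the labels. -/
def rotation : Module.End R (ListChain R (Word (ZMod p))) := mapChain (relabel (1 + ·))

lemma rotation_pow (i : ℕ) : rotation R p ^ i = mapChain (relabel ((i : ZMod p) + ·)) := by
  induction i with
  | zero =>
    have : (((0 : ℕ) : ZMod p) + ·) = id := funext fun a ↦ by simp
    exact LinearMap.ext fun c ↦ by
      rw [this, relabel_id, mapChain_id, pow_zero, Module.End.one_apply]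
  | succ i ih =>
    have : (((i + 1 : ℕ) : ZMod p) + ·) = (1 + ·) ∘ ((i : ZMod p) + ·) :=
      funext fun a ↦ by simp [add_left_comm, add_assoc]
    exact LinearMap.ext fun c ↦ by
      rw [pow_succ', ih, this, relabel_comp, mapChain_comp, Module.End.mul_apply, rotation]

lemma rotation_pow_card : rotation R p ^ p = 1 := by
  have : ((p : ZMod p) + ·) = id := funext fun a ↦ by simp
  exact LinearMap.ext fun c ↦ by
    rw [rotation_pow, this, relabel_id, mapChain_id, Module.End.one_apply]

lemma rotation_mem_supported_flags (k : ℕ) {c : ListChain R (Word (ZMod p))}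
    (hc : c ∈ supported R R (flags (ZMod p) m k)) :
    rotation R p c ∈ supported R R (flags (ZMod p) m k) :=
  apply_mem_of_mem_supported (fun l hl ↦ by
    rw [rotation, mapChain_single]
    exact single_mem_supported R 1 (map_relabel_mem_flags (add_right_injective 1) hl)) hc

lemma boundary_periodicDiff_rotation (k : ℕ) (c : ListChain R (Word (ZMod p))) :
    boundary (periodicDiff p (rotation R p) k c) = periodicDiff p (rotation R p) k (boundary c) :=
  map_periodicDiff (S := ⊤) (fun _ _ ↦ Submodule.mem_top) (fun c _ ↦ boundary_mapChain _ c) k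
    Submodule.mem_top

variable (R p m) in
/-- Chains of words resembling the cells of the infinite-dimensional sphere with its standard free
action of `ZMod p`. -/
def sphereChain : ℕ → ListChain R (Word (ZMod p))
  | 0 => single [base 0 m] 1
  | k + 1 => contraction 0 m (periodicDiff p (rotation R p) k (sphereChain k))

lemma sphereChain_mem_supported_flags (k : ℕ) :
    sphereChain R p m k ∈ supported R R (flags (ZMod p) m k) := by
  induction k with
  | zero => exact single_mem_supported R 1 ⟨rfl, List.pairwise_singleton _ _, by simp [cuts_base]⟩
  | succ k ih =>
    exact contraction_mem_supported_flags 0 m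
      (periodicDiff_mem (fun _ ↦ rotation_mem_supported_flags k) k ih)

lemma boundary_sphereChain_succ [CharP R p] (k : ℕ) :
    boundary (sphereChain R p m (k + 1)) =
      periodicDiff p (rotation R p) k (sphereChain R p m k) := by
  have hbase : mapChain (R := R) (fun _ ↦ base (0 : ZMod p) m)
      (periodicDiff p (rotation R p) k (sphereChain R p m k)) = 0 :=
    map_periodicDiff_eq_zero (S := ⊤) (fun _ _ ↦ Submodule.mem_top)
      (fun c _ ↦ (mapChain_comp _ _ c).symm) k Submodule.mem_top
  have hcycle : boundary (periodicDiff p (rotation R p) k (sphereChain R p m k)) = 0 := by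
    rw [boundary_periodicDiff_rotation]
    cases k with
    | zero =>
      simp [sphereChain, periodicDiff_of_even Even.zero, rotation]
    | succ k =>
      rw [boundary_sphereChain_succ k, ← Module.End.mul_apply,
        periodicDiff_succ_mul_periodicDiff rotation_pow_card, LinearMap.zero_apply]
  have hcontraction := boundary_contraction_add_contraction_boundary 0 m
    (periodicDiff p (rotation R p) k (sphereChain R p m k))
  rwa [hcycle, map_zero, add_zero, hbase, sub_zero] at hcontraction

section Labelling

variable {f : Word (ZMod p) → ZMod p} {k : ℕ}

lemma classifyingMap_mapChain_rotation
    (hf : ∀ X, cuts m X ≤ k → f (relabel (1 + ·) X) = 1 + f X) {c : ListChain R (Word (ZMod p))}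
    (hc : c ∈ supported R R (flags (ZMod p) m k)) :
    classifyingMap k (mapChain f (rotation R p c)) =
      translate 1 (classifyingMap k (mapChain f c)) := by
  rw [← classifyingMap_mapChain_add]
  refine congr_arg _ (eq_of_mem_supported (f := mapChain f ∘ₗ rotation R p)
    (g := mapChain (1 + ·) ∘ₗ mapChain f) (fun l hl ↦ ?_) hc)
  have : (l.map (relabel (1 + ·))).map f = (l.map f).map (1 + ·) := by
    simpa using fun X hX ↦ hf X (hl.2.2 X hX)
  simp [rotation, this]

lemma classifyingMap_boundary_mapChain [NeZero p] {c : ListChain R (Word (ZMod p))}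
    (hc : c ∈ supported R R (flags (ZMod p) m (k + 1))) :
    classifyingMap k (boundary (mapChain f c)) =
      cyclicDiff k (classifyingMap (k + 1) (mapChain f c)) := by
  refine eq_of_mem_supported (f := classifyingMap k ∘ₗ boundary ∘ₗ mapChain f)
    (g := cyclicDiff k ∘ₗ classifyingMap (k + 1) ∘ₗ mapChain f) (fun l hl ↦ ?_) hc
  simp [classifyingMap_boundary_single k (l := l.map f) (by simp [hl.1])]

lemma cyclicDiff_classifyingMap_sphereChain_succ [NeZero p] [CharP R p]
    (hf : ∀ X, cuts m X ≤ k → f (relabel (1 + ·) X) = 1 + f X) :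
    cyclicDiff k (classifyingMap (k + 1) (mapChain f (sphereChain R p m (k + 1)))) =
      cyclicDiff k (classifyingMap k (mapChain f (sphereChain R p m k))) := by
  rw [← classifyingMap_boundary_mapChain (sphereChain_mem_supported_flags (k + 1)),
    boundary_mapChain, boundary_sphereChain_succ]
  exact map_periodicDiff (t := rotation R p) (t' := translate 1)
    (f := classifyingMap (R := R) k ∘ₗ mapChain f) (fun _ ↦ rotation_mem_supported_flags k)
    (fun _ ↦ classifyingMap_mapChain_rotation hf) k (sphereChain_mem_supported_flags k)

lemma augmentation_classifyingMap_sphereChain [NeZero p] [CharP R p]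
    (hf : ∀ X, cuts m X ≤ k → f (relabel (1 + ·) X) = 1 + f X) :
    augmentation R p (classifyingMap k (mapChain f (sphereChain R p m k))) = 1 := by
  induction k with
  | zero => simp [sphereChain, classifyingSum]
  | succ k ih =>
    have hf' := fun X hX ↦ hf X (Nat.le_succ_of_le hX)
    rw [← ih hf', ← sub_eq_zero, ← map_sub]
    refine augmentation_eq_zero_of_cyclicDiff_eq_zero (k := k) ?_
    rw [map_sub, cyclicDiff_classifyingMap_sphereChain_succ hf', sub_self]

theorem exists_mem_flags_isChain_map_ne [Fact (1 < p)]
    (hf : ∀ X, cuts m X ≤ k → f (relabel (1 + ·) X) = 1 + f X) :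
    ∃ l ∈ flags (ZMod p) m k, (l.map f).IsChain (· ≠ ·) := by
  by_contra! hdegenerate
  have hzero : classifyingMap k (mapChain f (sphereChain (ZMod p) p m k)) = 0 := by
    refine eq_of_mem_supported (f := classifyingMap (R := ZMod p) k ∘ₗ mapChain f) (g := 0)
      (fun l hl ↦ ?_) (sphereChain_mem_supported_flags k)
    have hlen : (l.map f).length = k + 1 := by simp [hl.1]
    simp [classifyingSum_eq_zero_of_not_isChain hlen (hdegenerate l hl)]
  simpa [hzero] using augmentation_classifyingMap_sphereChain (R := ZMod p) hf

end Labelling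

end KyFan

/-! ### Equal splitting of weighted words -/

section Average

variable {p : ℕ} [Fact p.Prime]

/-- The average of the elements of a finite set, computed in `ZMod p`. It is equivariant on nonempty
proper subsets, since their cardinality is invertible. -/
def average (s : Finset (ZMod p)) : ZMod p := (∑ a ∈ s, a) / (s.card : ZMod p)

lemma average_map_add (a : ZMod p) {s : Finset (ZMod p)} (hs : s.Nonempty)
    (hs' : s ≠ Finset.univ) : average (s.map (addLeftEmbedding a)) = a + average s := by
  have hlt : s.card < p := by simpa using (Finset.card_lt_iff_ne_univ _).2 hs'
  have hne : (s.card : ZMod p) ≠ 0 := by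
    rw [Ne, ZMod.natCast_eq_zero_iff]
    exact Nat.not_dvd_of_pos_of_lt hs.card_pos hlt
  have hsum : ∑ b ∈ s, (a + b) = s.card * a + ∑ b ∈ s, b := by
    rw [Finset.sum_add_distrib, Finset.sum_const, nsmul_eq_mul]
  simp only [average, Finset.sum_map, Finset.card_map, addLeftEmbedding_apply, hsum]
  field_simp

variable {ι : Type*} [Nonempty ι]

/-- A label of a family of subsets of `ZMod p`: the average of one of the nonempty sets. Which one
depends only on the set of indices of the nonempty sets, so that the label is equivariant. -/
def familyLabel (s : ι → Finset (ZMod p)) : ZMod p :=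
  average (s (Classical.epsilon fun i ↦ (s i).Nonempty))

lemma familyLabel_map_add (a : ZMod p) {s : ι → Finset (ZMod p)} (hs : ∃ i, (s i).Nonempty)
    (hs' : ∀ i, s i ≠ Finset.univ) :
    familyLabel (fun i ↦ (s i).map (addLeftEmbedding a)) = a + familyLabel s := by
  simp only [familyLabel, Finset.map_nonempty]
  exact average_map_add a (Classical.epsilon_spec hs) (hs' _)

end Average

section ChainLength

lemma length_le_of_isChain_lt {l : List ℕ} {N : ℕ} (hl : l.IsChain (· < ·))
    (hmem : ∀ k ∈ l, 1 ≤ k ∧ k ≤ N) : l.length ≤ N := by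
  have hnodup : l.Nodup := (List.isChain_iff_pairwise.1 hl).imp ne_of_lt
  rw [← List.toFinset_card_of_nodup hnodup]
  have hsub : l.toFinset ⊆ Finset.Icc 1 N := fun k hk ↦
    Finset.mem_Icc.2 (hmem k (List.mem_toFinset.1 hk))
  simpa using Finset.card_le_card hsub

variable {ι α : Type*} [Fintype ι]

lemma sum_card_strictMono : StrictMono fun s : ι → Finset α ↦ ∑ i, (s i).card := by
  intro s t hst
  obtain ⟨hle, i, hi⟩ := Pi.lt_def.1 hst
  exact Finset.sum_lt_sum (fun i _ ↦ Finset.card_le_card (hle i))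
    ⟨i, Finset.mem_univ i, Finset.card_lt_card hi⟩

lemma sum_card_le_of_ne_univ [Fintype α] {s : ι → Finset α} (hs : ∀ i, s i ≠ Finset.univ) :
    ∑ i, (s i).card ≤ (Fintype.card α - 1) * Fintype.card ι := by
  calc ∑ i, (s i).card ≤ ∑ _i : ι, (Fintype.card α - 1) := Finset.sum_le_sum fun i _ ↦
        Nat.le_sub_one_of_lt ((Finset.card_lt_iff_ne_univ _).2 (hs i))
    _ = (Fintype.card α - 1) * Fintype.card ι := by simp [mul_comm]

lemma length_le_of_isChain_ne [Fintype α] {l : List (ι → Finset α)} (hmono : l.Pairwise (· ≤ ·))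
    (hne : l.IsChain (· ≠ ·)) (hmem : ∀ s ∈ l, (∃ i, (s i).Nonempty) ∧ ∀ i, s i ≠ Finset.univ) :
    l.length ≤ (Fintype.card α - 1) * Fintype.card ι := by
  have hlt : l.IsChain (· < ·) := by
    rw [List.isChain_iff_getElem] at hne ⊢
    exact fun k hk ↦ (hmono.isChain.getElem k hk).lt_of_ne (hne k hk)
  rw [← List.length_map (f := fun s : ι → Finset α ↦ ∑ i, (s i).card)]
  refine length_le_of_isChain_lt
    ((List.isChain_map _).2 (hlt.imp fun _ _ h ↦ sum_card_strictMono h)) ?_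
  refine List.forall_mem_map.2 fun s hs ↦ ⟨?_, sum_card_le_of_ne_univ (hmem s hs).2⟩
  obtain ⟨i, hi⟩ := (hmem s hs).1
  exact hi.card_pos.trans_le (Finset.single_le_sum_of_canonicallyOrdered
    (f := fun i ↦ (s i).card) (Finset.mem_univ i))

end ChainLength

section WeightedWords

open Word

section Mass

variable {α : Type*} [DecidableEq α] {m : ℕ} {w : ℕ → ℝ}

/-- The total weight of the cells among `0, …, m` with the label `a`. -/
def mass (m : ℕ) (w : ℕ → ℝ) (X : Word α) (a : α) : ℝ :=
  ∑ k ∈ Finset.range (m + 1), if X k = some a then w k else 0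

lemma mass_mono (hw : ∀ k, 0 ≤ w k) : Monotone (mass (α := α) m w) := by
  refine fun X Y hXY a ↦ Finset.sum_le_sum fun k _ ↦ ?_
  by_cases hX : X k = some a
  · rw [if_pos hX, if_pos (hXY k a hX)]
  · rw [if_neg hX]
    split_ifs
    exacts [hw k, le_rfl]

lemma mass_relabel {f : α → α} (hf : f.Injective) (X : Word α) (a : α) :
    mass m w (relabel f X) (f a) = mass m w X a := by
  refine Finset.sum_congr rfl fun k _ ↦ ?_
  simp [relabel, Option.map_eq_some_iff, hf.eq_iff]

lemma sum_mass_le [Fintype α] (hw : ∀ k, 0 ≤ w k) (X : Word α) :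
    ∑ a, mass m w X a ≤ ∑ k ∈ Finset.range (m + 1), w k := by
  unfold mass
  rw [Finset.sum_comm]
  refine Finset.sum_le_sum fun k _ ↦ ?_
  cases X k with
  | none => simpa using hw k
  | some a => simp

end Mass

variable {p m : ℕ} [Fact p.Prime] {ι : Type*} {w : ι → ℕ → ℝ}

/-- The labels that carry more than the fraction `1 / p` of the total of the weight `w i`, for each
index `i`. -/
def overweight (m : ℕ) (w : ι → ℕ → ℝ) (X : Word (ZMod p)) (i : ι) : Finset (ZMod p) :=
  {a | ∑ k ∈ Finset.range (m + 1), w i k < p * mass m (w i) X a}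

lemma mem_overweight {X : Word (ZMod p)} {i : ι} {a : ZMod p} :
    a ∈ overweight m w X i ↔ ∑ k ∈ Finset.range (m + 1), w i k < p * mass m (w i) X a := by
  simp [overweight]

lemma overweight_mono (hw : ∀ i k, 0 ≤ w i k) :
    Monotone (overweight m w : Word (ZMod p) → ι → Finset (ZMod p)) := by
  intro X Y hXY i a ha
  rw [mem_overweight] at ha ⊢
  exact ha.trans_le (mul_le_mul_of_nonneg_left (mass_mono (hw i) hXY a) p.cast_nonneg)

lemma overweight_relabel (X : Word (ZMod p)) (a : ZMod p) :
    overweight m w (relabel (a + ·) X) =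
      fun i ↦ (overweight m w X i).map (addLeftEmbedding a) := by
  ext i b
  simp only [Finset.mem_map, addLeftEmbedding_apply, mem_overweight]
  constructor
  · intro h
    refine ⟨-a + b, ?_, add_neg_cancel_left a b⟩
    rwa [← mass_relabel (add_right_injective a), add_neg_cancel_left]
  · rintro ⟨b, h, rfl⟩
    rwa [mass_relabel (add_right_injective a)]

lemma overweight_ne_univ (hw : ∀ i k, 0 ≤ w i k) (X : Word (ZMod p)) (i : ι) :
    overweight m w X i ≠ Finset.univ := by
  intro h
  have hlt : ∑ _a : ZMod p, ∑ k ∈ Finset.range (m + 1), w i k <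
      ∑ a : ZMod p, p * mass m (w i) X a :=
    Finset.sum_lt_sum_of_nonempty Finset.univ_nonempty fun a _ ↦
      mem_overweight.1 (h ▸ Finset.mem_univ a)
  rw [Finset.sum_const, Finset.card_univ, ZMod.card, nsmul_eq_mul, ← Finset.mul_sum] at hlt
  exact (lt_of_mul_lt_mul_left hlt p.cast_nonneg).not_ge (sum_mass_le (hw i) X)

theorem exists_word_mass_le [Fintype ι] {N : ℕ} (hN : (p - 1) * Fintype.card ι ≤ N) (m : ℕ)
    (hw : ∀ i k, 0 ≤ w i k) :
    ∃ X : Word (ZMod p), cuts m X ≤ N ∧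
      ∀ i a, p * mass m (w i) X a ≤ ∑ k ∈ Finset.range (m + 1), w i k := by
  by_contra! hcon
  have hnonempty : ∀ X : Word (ZMod p), cuts m X ≤ N → ∃ i, (overweight m w X i).Nonempty :=
    fun X hX ↦ (hcon X hX).imp fun i ⟨a, ha⟩ ↦ ⟨a, mem_overweight.2 ha⟩
  have : Nonempty ι := (hnonempty (base 0 m) (by simp [cuts_base])).nonempty
  have hequiv : ∀ X : Word (ZMod p), cuts m X ≤ N →
      familyLabel (overweight m w (relabel (1 + ·) X)) = 1 + familyLabel (overweight m w X) :=
    fun X hX ↦ by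
      rw [overweight_relabel, familyLabel_map_add 1 (hnonempty X hX) (overweight_ne_univ hw X)]
  obtain ⟨l, ⟨hlen, hmono, hcuts⟩, hne⟩ := exists_mem_flags_isChain_map_ne
    (f := fun X ↦ familyLabel (overweight m w X)) hequiv
  have hle := length_le_of_isChain_ne (l := l.map (overweight m w))
    (hmono.map _ fun _ _ h ↦ overweight_mono hw h)
    ((List.isChain_map _).2 (((List.isChain_map _).1 hne).imp fun _ _ h h' ↦ h (congr_arg _ h')))
    (List.forall_mem_map.2 fun X hX ↦ ⟨hnonempty X (hcuts X hX), overweight_ne_univ hw X⟩)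
  rw [List.length_map, hlen, ZMod.card] at hle
  lia

end WeightedWords

/-! ### Equal splitting of monotone functions -/

section Blocks

open Word

variable {α : Type*} [DecidableEq α]

lemma cuts_succ (k : ℕ) (X : Word α) : cuts (k + 1) X = cuts k X + cost (X k) (X (k + 1)) :=
  Finset.sum_range_succ _ k

lemma cuts_monotone (X : Word α) : Monotone fun k ↦ cuts k X :=
  monotone_nat_of_le_succ fun k ↦ (Nat.le_add_right _ _).trans_eq (cuts_succ k X).symm

lemma sum_blank_le {δ : ℝ} (hδ : 0 ≤ δ) (m : ℕ) (X : Word α) :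
    ∑ k ∈ Finset.range (m + 1), (if X k = none then δ else 0) ≤ (cuts m X + 1) * δ := by
  rw [Finset.sum_range_succ, cuts, Nat.cast_sum, add_mul, Finset.sum_mul, one_mul]
  refine add_le_add (Finset.sum_le_sum fun k _ ↦ ?_) (by split_ifs <;> simp [hδ])
  split_ifs with h
  · simp [cost, h]
  · positivity

lemma eq_or_eq_none_of_cuts_eq {X : Word α} {k l : ℕ} {a : α} (hkl : k ≤ l) (hk : X k = some a)
    (h : cuts k X = cuts l X) : X l = some a ∨ X l = none := by
  induction l, hkl using Nat.le_induction with
  | base => exact .inl hk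
  | succ l hl ih =>
    have hle := cuts_monotone X hl
    rw [cuts_succ] at h
    have : cost (X l) (X (l + 1)) = 0 := by lia
    rcases ih (by lia) with hX | hX <;> rcases hY : X (l + 1) with - | b <;>
      simp_all [cost]

variable [Nonempty α]

/-- The common label of the labelled cells preceded by exactly `j` cuts. -/
def blockLabel (X : Word α) (j : ℕ) : α :=
  Classical.epsilon fun a ↦ ∃ k, cuts k X = j ∧ X k = some a

lemma blockLabel_cuts {X : Word α} {k : ℕ} {a : α} (hk : X k = some a) :
    blockLabel X (cuts k X) = a := by
  obtain ⟨l, hl, hX⟩ : ∃ l, cuts l X = cuts k X ∧ X l = some (blockLabel X (cuts k X)) :=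
    Classical.epsilon_spec (p := fun b ↦ ∃ l, cuts l X = cuts k X ∧ X l = some b) ⟨a, k, rfl, hk⟩
  rcases le_total k l with hkl | hlk
  · simpa [hX] using eq_or_eq_none_of_cuts_eq hkl hk hl.symm
  · simpa [hk, eq_comm] using eq_or_eq_none_of_cuts_eq hlk hX hl

lemma sum_blockLabel_le {m : ℕ} {w : ℕ → ℝ} {δ : ℝ} (hδ : 0 ≤ δ) (hw : ∀ k ≤ m, w k ≤ δ)
    (X : Word α) (a : α) :
    ∑ k ∈ Finset.range (m + 1) with blockLabel X (cuts k X) = a, w k ≤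
      mass m w X a + (cuts m X + 1) * δ := by
  calc ∑ k ∈ Finset.range (m + 1) with blockLabel X (cuts k X) = a, w k
      ≤ ∑ k ∈ Finset.range (m + 1),
          ((if X k = some a then w k else 0) + if X k = none then δ else 0) := by
        rw [Finset.sum_filter]
        refine Finset.sum_le_sum fun k hk ↦ ?_
        rcases hX : X k with - | b
        · simp only [reduceCtorEq, if_false, if_true, zero_add]
          split_ifs
          exacts [hw k (Nat.lt_succ_iff.1 (Finset.mem_range.1 hk)), hδ]
        · simp [blockLabel_cuts hX]
    _ ≤ mass m w X a + (cuts m X + 1) * δ := by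
        rw [Finset.sum_add_distrib, mass]
        exact add_le_add le_rfl (sum_blank_le hδ m X)

end Blocks

section Share

variable {α : Type*} [DecidableEq α] {N : ℕ}

/-- The sequences of `N` cut points in the unit interval, together with its end points. -/
def cutPoints (N : ℕ) : Set (Fin (N + 2) → ℝ) :=
  {x | Monotone x ∧ x 0 = 0 ∧ x (Fin.last (N + 1)) = 1}

lemma mem_Icc_of_mem_cutPoints {x : Fin (N + 2) → ℝ} (hx : x ∈ cutPoints N) (j : Fin (N + 2)) :
    x j ∈ Set.Icc 0 1 :=
  ⟨hx.2.1.symm.trans_le (hx.1 (Fin.zero_le j)), (hx.1 (Fin.le_last j)).trans_eq hx.2.2⟩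

lemma isCompact_cutPoints : IsCompact (cutPoints N) := by
  refine (isCompact_univ_pi fun _ ↦ isCompact_Icc).of_isClosed_subset ?_
    fun x hx j _ ↦ mem_Icc_of_mem_cutPoints hx j
  exact isClosed_monotone.inter ((isClosed_eq (continuous_apply _) continuous_const).inter
    (isClosed_eq (continuous_apply _) continuous_const))

/-- The total increment of `F` over the intervals between the points `x` with the label `a`. -/
def share (F : ℝ → ℝ) (x : Fin (N + 2) → ℝ) (lab : Fin (N + 1) → α) (a : α) : ℝ :=
  ∑ j with lab j = a, (F (x j.succ) - F (x j.castSucc))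

lemma continuous_share {F : ℝ → ℝ} (hF : Continuous F) (lab : Fin (N + 1) → α) (a : α) :
    Continuous fun x ↦ share F x lab a :=
  continuous_finsetSum _ fun _ _ ↦
    (hF.comp (continuous_apply _)).sub (hF.comp (continuous_apply _))

lemma sum_share [Fintype α] (F : ℝ → ℝ) {x : Fin (N + 2) → ℝ} (hx : x ∈ cutPoints N)
    (lab : Fin (N + 1) → α) : ∑ a, share F x lab a = F 1 - F 0 := by
  have htel := (Fin.sum_univ_succ (F ∘ x)).symm.trans (Fin.sum_univ_castSucc (F ∘ x))
  simp only [Function.comp_apply, hx.2.1, hx.2.2] at htel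
  simp only [share, Finset.sum_fiberwise, Finset.sum_sub_distrib]
  linarith

/-- The points at which a monotone sequence `b` on the cells of the grid `y 0, …, y M` passes the
values `0, …, N + 1`. -/
def passagePoints (b : ℕ → ℕ) (y : ℕ → ℝ) (M N : ℕ) (j : Fin (N + 2)) : ℝ :=
  y (Nat.count (fun k ↦ b k < j) M)

variable {b : ℕ → ℕ} {y : ℕ → ℝ} {M : ℕ}

lemma passagePoints_mem_cutPoints (hb : ∀ k < M, b k ≤ N) (hy : Monotone y) (hy0 : y 0 = 0)
    (hyM : y M = 1) : passagePoints b y M N ∈ cutPoints N := by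
  refine ⟨fun i j hij ↦ hy (Nat.count_mono_left fun k _ hk ↦ hk.trans_le hij), ?_, ?_⟩
  · simp [passagePoints, hy0]
  · rw [passagePoints, Fin.val_last,
      Nat.count_iff_forall.2 fun k hk ↦ Nat.lt_succ_of_le (hb k hk), hyM]

lemma sum_sub_of_lt (hb : Monotone b) (H : ℕ → ℝ) (j M : ℕ) :
    ∑ k ∈ Finset.range M with b k < j, (H (k + 1) - H k) =
      H (Nat.count (fun k ↦ b k < j) M) - H 0 := by
  have hinit : (Finset.range M).filter (fun k ↦ b k < j) =
      Finset.range (Nat.count (fun k ↦ b k < j) M) := by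
    induction M with
    | zero => simp
    | succ M ih =>
      rw [Finset.range_add_one, Finset.filter_insert, ih, Nat.count_succ]
      split_ifs with h
      · rw [Nat.count_iff_forall.2 fun k hk ↦ (hb hk.le).trans_lt h, Finset.range_add_one]
      · rfl
  rw [hinit, Finset.sum_range_sub]

lemma sub_passagePoints (hb : Monotone b) (F : ℝ → ℝ) (j : Fin (N + 1)) :
    F (passagePoints b y M N j.succ) - F (passagePoints b y M N j.castSucc) =
      ∑ k ∈ Finset.range M with b k = j, (F (y (k + 1)) - F (y k)) := by
  have hsplit : {k ∈ Finset.range M | b k < j + 1} =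
      {k ∈ Finset.range M | b k < j} ∪ {k ∈ Finset.range M | b k = j} := by
    rw [← Finset.filter_or]
    simp only [Nat.lt_succ_iff_lt_or_eq]
  have hdisj : Disjoint {k ∈ Finset.range M | b k < j} {k ∈ Finset.range M | b k = j} :=
    Finset.disjoint_filter.2 fun k _ h ↦ h.ne
  have hsum := Finset.sum_union (f := fun k ↦ F (y (k + 1)) - F (y k)) hdisj
  rw [← hsplit, sum_sub_of_lt hb (fun k ↦ F (y k)), sum_sub_of_lt hb (fun k ↦ F (y k))] at hsum
  simp only [passagePoints, Fin.val_succ, Fin.val_castSucc]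
  linarith

lemma share_passagePoints (hb : Monotone b) (hbN : ∀ k < M, b k ≤ N) (F : ℝ → ℝ) (lab : ℕ → α)
    (a : α) :
    share F (passagePoints b y M N) (fun j ↦ lab j) a =
      ∑ k ∈ Finset.range M with lab (b k) = a, (F (y (k + 1)) - F (y k)) := by
  simp only [share, sub_passagePoints hb]
  rw [Finset.sum_comm' (t' := {k ∈ Finset.range M | lab (b k) = a})
    (s' := fun k ↦ {j : Fin (N + 1) | b k = j}) (by grind)]
  refine Finset.sum_congr rfl fun k hk ↦ ?_
  have hkN := hbN k (Finset.mem_range.1 (Finset.mem_filter.1 hk).1)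
  rw [Finset.sum_const, (Finset.card_eq_one (s := {j : Fin (N + 1) | b k = j})).2
    ⟨⟨b k, Nat.lt_succ_of_le hkN⟩, by ext j; simp [Fin.ext_iff, eq_comm]⟩, one_smul]

end Share

section Splitting

open Filter Topology Word

variable {ι : Type*} {F : ι → ℝ → ℝ}

lemma exists_fine_grid [Finite ι] (hF : ∀ i, Continuous (F i)) {δ : ℝ} (hδ : 0 < δ) :
    ∃ m : ℕ, ∀ i, ∀ k ≤ m,
      F i (((k + 1 : ℕ) : ℝ) / (m + 1 : ℕ)) - F i ((k : ℝ) / (m + 1 : ℕ)) ≤ δ := by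
  have := Fintype.ofFinite ι
  have huc : UniformContinuousOn (fun t i ↦ F i t) (Set.Icc (0 : ℝ) 1) :=
    isCompact_Icc.uniformContinuousOn_of_continuous (continuous_pi hF).continuousOn
  obtain ⟨d, hd, hdist⟩ := Metric.uniformContinuousOn_iff.1 huc δ hδ
  obtain ⟨m, hm⟩ := exists_nat_one_div_lt hd
  have hgrid : ∀ k ≤ m + 1, ((k : ℝ) / (m + 1 : ℕ)) ∈ Set.Icc (0 : ℝ) 1 := fun k hk ↦
    ⟨by positivity, div_le_one_of_le₀ (by exact_mod_cast hk) (by positivity)⟩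
  refine ⟨m, fun i k hk ↦ (le_abs_self _).trans ?_⟩
  refine (dist_le_pi_dist _ _ i).trans
    (hdist _ (hgrid (k + 1) (by lia)) _ (hgrid k (by lia)) ?_).le
  rw [Real.dist_eq, ← sub_div]
  push_cast
  rwa [add_sub_cancel_left, abs_of_pos (by positivity)]

variable [Fintype ι] {p : ℕ} [Fact p.Prime] {N : ℕ}

/-- The blanks, at most `N + 1` in number, contribute the error. -/
lemma exists_share_le_add (hN : (p - 1) * Fintype.card ι ≤ N) (hF : ∀ i, Continuous (F i))
    (hmono : ∀ i, Monotone (F i)) {ε : ℝ} (hε : 0 < ε) :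
    ∃ lab : Fin (N + 1) → ZMod p, ∃ x ∈ cutPoints N,
      ∀ i a, p * share (F i) x lab a ≤ F i 1 - F i 0 + ε := by
  have hp : (0 : ℝ) < p := by exact_mod_cast (Fact.out : p.Prime).pos
  obtain ⟨m, hgrid⟩ := exists_fine_grid hF (δ := ε / (p * (N + 1))) (by positivity)
  set y : ℕ → ℝ := fun k ↦ (k : ℝ) / (m + 1 : ℕ) with hy
  have hy_mono : Monotone y := fun _ _ h ↦ by simp only [hy]; gcongr
  have hy0 : y 0 = 0 := by simp [hy]
  have hy1 : y (m + 1) = 1 := div_self (by positivity)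
  obtain ⟨X, hX, hmass⟩ := exists_word_mass_le hN m (w := fun i k ↦ F i (y (k + 1)) - F i (y k))
    fun i k ↦ sub_nonneg.2 (hmono i (hy_mono k.le_succ))
  have hXN : ∀ k < m + 1, cuts k X ≤ N := fun k hk ↦
    (cuts_monotone X (Nat.lt_succ_iff.1 hk)).trans hX
  refine ⟨fun j ↦ blockLabel X j, passagePoints (fun k ↦ cuts k X) y (m + 1) N,
    passagePoints_mem_cutPoints hXN hy_mono hy0 hy1, fun i a ↦ ?_⟩
  rw [share_passagePoints (cuts_monotone X) hXN]
  have htotal := Finset.sum_range_sub (F i ∘ y) (m + 1)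
  simp only [Function.comp_apply, hy0, hy1] at htotal
  have hXN' : (cuts m X : ℝ) ≤ N := by exact_mod_cast hX
  calc _ ≤ p * (mass m (fun k ↦ F i (y (k + 1)) - F i (y k)) X a +
        (cuts m X + 1) * (ε / (p * (N + 1)))) :=
        mul_le_mul_of_nonneg_left (sum_blockLabel_le (by positivity) (hgrid i) X a) hp.le
    _ ≤ p * (mass m (fun k ↦ F i (y (k + 1)) - F i (y k)) X a + (N + 1) * (ε / (p * (N + 1)))) := by
        gcongr
    _ = p * mass m (fun k ↦ F i (y (k + 1)) - F i (y k)) X a + ε := by field_simp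
    _ ≤ F i 1 - F i 0 + ε := by
        rw [← htotal]
        gcongr
        exact hmass i a

lemma exists_share_le (hN : (p - 1) * Fintype.card ι ≤ N) (hF : ∀ i, Continuous (F i))
    (hmono : ∀ i, Monotone (F i)) :
    ∃ lab : Fin (N + 1) → ZMod p, ∃ x ∈ cutPoints N,
      ∀ i a, p * share (F i) x lab a ≤ F i 1 - F i 0 := by
  choose lab x hx hle using fun k : ℕ ↦
    exists_share_le_add hN hF hmono (Nat.one_div_pos_of_nat (α := ℝ) (n := k))
  obtain ⟨⟨lab₀, x₀⟩, ⟨-, hx₀⟩, φ, hφ, hlim⟩ :=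
    (isCompact_univ.prod isCompact_cutPoints).tendsto_subseq
      (x := fun k ↦ (lab k, x k)) fun k ↦ ⟨Set.mem_univ _, hx k⟩
  obtain ⟨hlab, hxlim⟩ := Prod.tendsto_iff _ _ |>.1 hlim
  refine ⟨lab₀, x₀, hx₀, fun i a ↦ le_of_tendsto_of_tendsto
    ((((continuous_share (hF i) lab₀ a).tendsto x₀).comp hxlim).const_mul (p : ℝ))
    (g := fun k ↦ F i 1 - F i 0 + 1 / ((φ k : ℝ) + 1)) ?_ ?_⟩
  · simpa using (tendsto_one_div_add_atTop_nhds_zero_nat.comp hφ.tendsto_atTop).const_add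
      (F i 1 - F i 0)
  · rw [nhds_discrete, tendsto_pure] at hlab
    filter_upwards [hlab] with k hk
    simpa [← hk] using hle (φ k) i a

theorem exists_share_eq (hN : (p - 1) * Fintype.card ι ≤ N) (hF : ∀ i, Continuous (F i))
    (hmono : ∀ i, Monotone (F i)) :
    ∃ lab : Fin (N + 1) → ZMod p, ∃ x ∈ cutPoints N,
      ∀ i a, p * share (F i) x lab a = F i 1 - F i 0 := by
  obtain ⟨lab, x, hx, hle⟩ := exists_share_le hN hF hmono
  refine ⟨lab, x, hx, fun i a ↦ ?_⟩
  refine (Finset.sum_eq_sum_iff_of_le fun a _ ↦ hle i a).1 ?_ a (Finset.mem_univ a)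
  rw [← Finset.mul_sum, sum_share _ hx, Finset.sum_const, Finset.card_univ, ZMod.card,
    nsmul_eq_mul]

end Splitting

/-! ### Equal splitting of measures -/

section Part

variable {α : Type*} [DecidableEq α] {N : ℕ} {x : Fin (N + 2) → ℝ} {lab : Fin (N + 1) → α}

/-- The union of the open intervals between the points `x` with the label `a`. -/
def part (x : Fin (N + 2) → ℝ) (lab : Fin (N + 1) → α) (a : α) : Set ℝ :=
  ⋃ j ∈ ({j | lab j = a} : Finset (Fin (N + 1))), Set.Ioo (x j.castSucc) (x j.succ)

/-- The inner cut points adjacent to an interval with the label `a`. -/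
def partBoundary (x : Fin (N + 2) → ℝ) (lab : Fin (N + 1) → α) (a : α) : Finset ℝ :=
  ({j : Fin N | lab j.castSucc = a ∨ lab j.succ = a} : Finset (Fin N)).image
    fun j ↦ x j.succ.castSucc

lemma isOpen_part (x : Fin (N + 2) → ℝ) (lab : Fin (N + 1) → α) (a : α) : IsOpen (part x lab a) :=
  isOpen_biUnion fun _ _ ↦ isOpen_Ioo

lemma pairwise_disjoint_Ioo (hx : Monotone x) :
    Pairwise (Function.onFun Disjoint fun j : Fin (N + 1) ↦ Set.Ioo (x j.castSucc) (x j.succ)) := by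
  intro i j hij
  wlog h : i < j generalizing i j
  · exact (this hij.symm (hij.symm.lt_of_le (not_lt.1 h))).symm
  have hle : x i.succ ≤ x j.castSucc := hx (Fin.succ_le_castSucc_iff.2 h)
  exact Set.disjoint_left.2 fun z hz hz' ↦ (hz.2.trans_le hle).not_gt hz'.1

lemma pairwise_disjoint_part (hx : Monotone x) :
    Pairwise (Function.onFun Disjoint (part x lab)) := by
  intro a b hab
  simp only [Function.onFun, part, Set.disjoint_iUnion_left, Set.disjoint_iUnion_right,
    Finset.mem_filter_univ]
  exact fun i hi j hj ↦ pairwise_disjoint_Ioo hx fun h ↦ hab (by rw [← hi, ← hj, h])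

lemma exists_eq_of_mem_frontier_part {a : α} {z : ℝ} (hz : z ∈ frontier (part x lab a)) :
    ∃ j, lab j = a ∧ (z = x j.castSucc ∨ z = x j.succ) := by
  rw [(isOpen_part x lab a).frontier_eq] at hz
  have hclosure : closure (part x lab a) ⊆
      ⋃ j ∈ ({j | lab j = a} : Finset (Fin (N + 1))), Set.Icc (x j.castSucc) (x j.succ) :=
    closure_minimal (Set.iUnion₂_mono fun j _ ↦ Set.Ioo_subset_Icc_self)
      (Set.Finite.isClosed_biUnion (Finset.finite_toSet _) fun j _ ↦ isClosed_Icc)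
  obtain ⟨j, hj, hzj⟩ := Set.mem_iUnion₂.1 (hclosure hz.1)
  refine ⟨j, Finset.mem_filter_univ j |>.1 hj, ?_⟩
  by_contra! hcon
  exact hz.2 (Set.mem_biUnion hj ⟨hcon.1.symm.lt_of_le hzj.1, hcon.2.lt_of_le hzj.2⟩)

lemma frontier_part_inter_Ioo_subset (hx : x ∈ cutPoints N) (a : α) :
    frontier (part x lab a) ∩ Set.Ioo 0 1 ⊆ partBoundary x lab a := by
  rintro z ⟨hz, hz0, hz1⟩
  obtain ⟨j, hj, rfl | rfl⟩ := exists_eq_of_mem_frontier_part hz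
  · cases j using Fin.cases with
    | zero => exact absurd hz0 (by simp [hx.2.1])
    | succ j => exact Finset.mem_image_of_mem _ (by simp [hj])
  · cases j using Fin.lastCases with
    | last => exact absurd hz1 (by simp [hx.2.2])
    | cast j => exact Finset.mem_image_of_mem _ (by simp [hj])

lemma sum_card_partBoundary_le [Fintype α] (x : Fin (N + 2) → ℝ) (lab : Fin (N + 1) → α) :
    ∑ a, (partBoundary x lab a).card ≤ 2 * N := by
  have hfib (f : Fin N → α) : ∑ a, Finset.card {j | f j = a} = N := by
    simpa using (Finset.card_eq_sum_card_fiberwise (s := Finset.univ) (t := Finset.univ) (f := f)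
      fun _ _ ↦ Finset.mem_coe.2 (Finset.mem_univ _)).symm
  calc ∑ a, (partBoundary x lab a).card
      ≤ ∑ a, (Finset.card {j : Fin N | lab j.castSucc = a} +
          Finset.card {j : Fin N | lab j.succ = a}) :=
        Finset.sum_le_sum fun a _ ↦ Finset.card_image_le.trans <| by
          rw [Finset.filter_or]
          exact Finset.card_union_le _ _
    _ = 2 * N := by rw [Finset.sum_add_distrib, hfib, hfib, two_mul]

lemma measureReal_part {ν : Measure ℝ} [IsFiniteMeasure ν] {F : ℝ → ℝ}
    (hF : ∀ s t, s ≤ t → F t - F s = ν.real (Set.Ioo s t)) (hx : Monotone x) (a : α) :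
    ν.real (part x lab a) = share F x lab a := by
  rw [part, measureReal_biUnion_finset (fun _ _ _ _ h ↦ pairwise_disjoint_Ioo hx h)
    fun _ _ ↦ measurableSet_Ioo]
  exact Finset.sum_congr rfl fun j _ ↦ (hF _ _ (hx (Fin.castSucc_le_succ j))).symm

end Part

section MeasureSplitting

lemma exists_continuous_monotone_sub_eq (ν : Measure ℝ) [IsFiniteMeasure ν]
    [NullSingletonClass ν] : ∃ F : ℝ → ℝ, Continuous F ∧ Monotone F ∧
      ∀ s t, s ≤ t → F t - F s = ν.real (Set.Ioo s t) := by
  have hone (s t : ℝ) : IntervalIntegrable (fun _ ↦ (1 : ℝ)) ν s t := intervalIntegrable_const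
  have hsub (s t : ℝ) (hst : s ≤ t) :
      (∫ _ in (0 : ℝ)..t, (1 : ℝ) ∂ν) - ∫ _ in (0 : ℝ)..s, (1 : ℝ) ∂ν = ν.real (Set.Ioo s t) := by
    rw [intervalIntegral.integral_interval_sub_left (hone _ _) (hone _ _),
      intervalIntegral.integral_of_le hst, setIntegral_const, smul_eq_mul, mul_one]
    exact (measureReal_congr Ioo_ae_eq_Ioc).symm
  exact ⟨fun t ↦ ∫ _ in (0 : ℝ)..t, (1 : ℝ) ∂ν, intervalIntegral.continuous_primitive hone 0,
    fun s t hst ↦ sub_nonneg.1 ((hsub s t hst).symm ▸ measureReal_nonneg), hsub⟩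

variable {ι : Type*} [Fintype ι]

theorem exists_partition_measureReal_eq (p : ℕ) [Fact p.Prime] (ν : ι → Measure ℝ)
    [∀ i, IsFiniteMeasure (ν i)] [∀ i, NullSingletonClass (ν i)]
    (hν : ∀ i, ν i (Set.Icc 0 1)ᶜ = 0) :
    ∃ (P : ZMod p → Set ℝ) (B : ZMod p → Finset ℝ), (∀ a, IsOpen (P a)) ∧
      Pairwise (Function.onFun Disjoint P) ∧ (∀ a, frontier (P a) ∩ Set.Ioo 0 1 ⊆ B a) ∧
      ∑ a, (B a).card ≤ 2 * ((p - 1) * Fintype.card ι) ∧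
      ∀ i a, p * (ν i).real (P a) = (ν i).real Set.univ := by
  choose F hF hmono hsub using fun i ↦ exists_continuous_monotone_sub_eq (ν i)
  obtain ⟨lab, x, hx, hshare⟩ := exists_share_eq (p := p) le_rfl hF hmono
  refine ⟨part x lab, partBoundary x lab, isOpen_part x lab, pairwise_disjoint_part hx.1,
    frontier_part_inter_Ioo_subset hx, sum_card_partBoundary_le x lab, fun i a ↦ ?_⟩
  rw [measureReal_part (hsub i) hx.1, hshare, hsub i 0 1 zero_le_one,
    measureReal_congr Ioo_ae_eq_Icc]
  exact measureReal_congr (ae_eq_univ.2 (hν i))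

end MeasureSplitting

/-! ### Good ratios -/

/-- The ratio `α` is good if there is `c > 0` such that, for any `n` and any `n` finite atomless
measures concentrated on the unit interval, some set with at most `(2 - c) * n` boundary points
inside the interval has the fraction `α` of each of the measures. -/
def GoodRatio (α : ℝ) : Prop :=
  ∃ c : ℝ, 0 < c ∧ ∀ (n : ℕ) (μ : Fin n → Measure ℝ) [∀ i, IsFiniteMeasure (μ i)]
    [∀ i, NullSingletonClass (μ i)], (∀ i, μ i (Set.Icc 0 1)ᶜ = 0) →
    ∃ (A : Set ℝ) (E : Finset ℝ), MeasurableSet A ∧ frontier A ∩ Set.Ioo 0 1 ⊆ E ∧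
      (E.card : ℝ) ≤ (2 - c) * n ∧ ∀ i, (μ i).real A = α * (μ i).real Set.univ

namespace GoodRatio

lemma one : GoodRatio 1 :=
  ⟨1, one_pos, fun n μ _ _ _ ↦ ⟨Set.univ, ∅, MeasurableSet.univ, by simp, by simp, by simp⟩⟩

lemma one_sub {α : ℝ} (h : GoodRatio α) : GoodRatio (1 - α) := by
  obtain ⟨c, hc, h⟩ := h
  refine ⟨c, hc, fun n μ _ _ hμ ↦ ?_⟩
  obtain ⟨A, E, hA, hE, hcard, hAα⟩ := h n μ hμ
  refine ⟨Aᶜ, E, hA.compl, by rwa [frontier_compl], hcard, fun i ↦ ?_⟩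
  rw [measureReal_compl hA, hAα, sub_mul, one_mul]

open Classical in
lemma frontier_inter_inter_Ioo_subset {A Q : Set ℝ} {E B : Finset ℝ} (hQ : IsOpen Q)
    (hE : frontier A ∩ Set.Ioo 0 1 ⊆ E) (hB : frontier Q ∩ Set.Ioo 0 1 ⊆ B) :
    frontier (A ∩ Q) ∩ Set.Ioo 0 1 ⊆ ({z ∈ E | z ∈ Q} ∪ B : Finset ℝ) := by
  rintro z ⟨hz, hz01⟩
  rw [Finset.mem_coe, Finset.mem_union, Finset.mem_filter]
  by_cases hfr : z ∈ frontier Q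
  · exact .inr (hB ⟨hfr, hz01⟩)
  · obtain ⟨hzA, hzQ⟩ := (frontier_inter_subset _ _ hz).resolve_right fun h ↦ hfr h.2
    rw [hQ.frontier_eq, Set.mem_sdiff, not_and_not_right] at hfr
    exact .inl ⟨hE ⟨hzA, hz01⟩, hfr hzQ⟩

open Classical in
lemma sum_card_filter_mem_le {ι X : Type*} [Fintype ι] {P : ι → Set X}
    (hP : Pairwise (Function.onFun Disjoint P)) (E : Finset X) :
    ∑ a, Finset.card {z ∈ E | z ∈ P a} ≤ E.card := by
  rw [← Finset.card_biUnion]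
  · exact Finset.card_le_card (Finset.biUnion_subset.2 fun a _ ↦ Finset.filter_subset _ _)
  · exact fun a _ b _ hab ↦ Finset.disjoint_filter.2 fun z _ ha hb ↦
      Set.disjoint_left.1 (hP hab) ha hb

open Classical in
/-- Splitting into `p` parts creates at most `2 * (p - 1) * n` new boundary points, since a cut
bounds at most two parts, and an old boundary point bounds at most one part. The average is
`((2 - c) * n + 2 * (p - 1) * n) / p = (2 - c / p) * n`. -/
lemma div_prime {α : ℝ} (h : GoodRatio α) (p : ℕ) [Fact p.Prime] : GoodRatio (α / p) := by
  have hp : (0 : ℝ) < p := by exact_mod_cast (Fact.out : p.Prime).pos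
  obtain ⟨c, hc, h⟩ := h
  refine ⟨c / p, by positivity, fun n μ _ _ hμ ↦ ?_⟩
  obtain ⟨A, E, hA, hE, hcard, hAα⟩ := h n μ hμ
  obtain ⟨P, B, hopen, hdisj, hfrontier, hB, hP⟩ :=
    exists_partition_measureReal_eq p (fun i ↦ (μ i).restrict A) fun i ↦
      nonpos_iff_eq_zero.1 ((Measure.restrict_apply_le _ _).trans (hμ i).le)
  have hsum : ∑ a, (({z ∈ E | z ∈ P a} ∪ B a).card : ℝ) ≤ ∑ _a : ZMod p, (2 - c / p) * n := by
    have hnat : ∑ a, ({z ∈ E | z ∈ P a} ∪ B a).card ≤ E.card + 2 * ((p - 1) * n) := by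
      refine (Finset.sum_le_sum fun a _ ↦ Finset.card_union_le _ _).trans ?_
      rw [Finset.sum_add_distrib]
      exact Nat.add_le_add (sum_card_filter_mem_le hdisj E) (by simpa using hB)
    calc ∑ a, (({z ∈ E | z ∈ P a} ∪ B a).card : ℝ) ≤ E.card + 2 * ((p - 1) * n) := by
          rw [← Nat.cast_pred (Fact.out : p.Prime).pos]
          exact_mod_cast hnat
      _ ≤ (2 - c) * n + 2 * ((p - 1) * n) := by gcongr
      _ = ∑ _a : ZMod p, (2 - c / p) * n := by
          rw [Finset.sum_const, Finset.card_univ, ZMod.card, nsmul_eq_mul]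
          field_simp
          ring
  obtain ⟨a, -, ha⟩ := Finset.exists_le_of_sum_le Finset.univ_nonempty hsum
  refine ⟨A ∩ P a, {z ∈ E | z ∈ P a} ∪ B a, hA.inter (hopen a).measurableSet,
    frontier_inter_inter_Ioo_subset (hopen a) hE (hfrontier a), ha, fun i ↦ ?_⟩
  have hPa := hP i a
  rw [measureReal_restrict_apply (hopen a).measurableSet, Set.inter_comm,
    measureReal_restrict_apply_univ, hAα] at hPa
  rw [div_mul_eq_mul_div, eq_div_iff hp.ne', mul_comm, hPa]

lemma div_natCast {α : ℝ} (h : GoodRatio α) {q : ℕ} (hq : q ≠ 0) : GoodRatio (α / q) := by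
  induction q using Nat.recOnMul generalizing α with
  | zero => exact absurd rfl hq
  | one => simpa using h
  | prime p hp =>
    have : Fact p.Prime := ⟨hp⟩
    exact h.div_prime p
  | mul a b ha hb =>
    rw [Nat.cast_mul, ← div_div]
    exact hb (ha h (left_ne_zero_of_mul hq)) (right_ne_zero_of_mul hq)

/-- Division with remainder, `b = q * a + r`, gives `a / b = (1 - r / b) / q` with `r < a`. -/
lemma natCast_div_natCast {a b : ℕ} (hab : a ≤ b) : GoodRatio (a / b) := by
  induction a using Nat.strong_induction_on with
  | _ a ih =>
    rcases a.eq_zero_or_pos with rfl | ha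
    · simpa using one.one_sub
    · have hq : b / a ≠ 0 := (Nat.div_pos hab ha).ne'
      have hr := (ih (b % a) (Nat.mod_lt b ha) (Nat.mod_le b a)).one_sub.div_natCast hq
      convert hr using 1
      have hb : (b : ℝ) ≠ 0 := by exact_mod_cast (ha.trans_le hab).ne'
      have hq' : ((b / a : ℕ) : ℝ) ≠ 0 := by exact_mod_cast hq
      have hdiv : (a * (b / a : ℕ) + (b % a : ℕ) : ℝ) = b := by exact_mod_cast Nat.div_add_mod b a
      rw [eq_div_iff hq', one_sub_div hb, div_mul_eq_mul_div, ← eq_sub_of_add_eq hdiv]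

lemma ratCast {α : ℚ} (h₀ : 0 ≤ α) (h₁ : α ≤ 1) : GoodRatio α := by
  lift α to ℚ≥0 using h₀
  have hle : α.num ≤ α.den := by exact_mod_cast Rat.num_le_denom_iff.2 h₁
  simpa [NNRat.cast_def] using natCast_div_natCast hle

end GoodRatio

/-! ### Achievable sets -/

section Achievable

lemma subset_or_disjoint_of_disjoint_frontier {X : Type*} [TopologicalSpace X] {s A : Set X}
    (hs : IsPreconnected s) (h : Disjoint s (frontier A)) : s ⊆ A ∨ Disjoint s A := by
  have hcover : s ⊆ interior A ∪ (closure A)ᶜ := fun z hz ↦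
    or_iff_not_imp_right.2 fun hcl ↦ by_contra fun h_int ↦
      Set.disjoint_left.1 h hz ⟨Set.not_notMem.1 hcl, h_int⟩
  have hdisj : Disjoint (interior A) (closure A)ᶜ :=
    Set.disjoint_compl_right_iff_subset.2 interior_subset_closure
  refine (hs.subset_or_subset isOpen_interior isClosed_closure.isOpen_compl hdisj hcover).imp
    (fun hsA ↦ hsA.trans interior_subset) fun hsA ↦ ?_
  exact (Set.disjoint_compl_left_iff_subset.2 subset_closure).mono_left hsA

lemma exists_mem_cutPoints_range_eq {E : Finset ℝ} (hE : (E : Set ℝ) ⊆ Set.Ioo 0 1) :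
    ∃ x ∈ cutPoints E.card, Set.range x = insert 0 (insert 1 (E : Set ℝ)) := by
  have h0 : (0 : ℝ) ∉ insert 1 E := fun h ↦ by
    rcases Finset.mem_insert.1 h with h | h
    · exact zero_ne_one h
    · exact (hE h).1.false
  have h1 : (1 : ℝ) ∉ E := fun h ↦ (hE h).2.false
  have hcard : (insert 0 (insert 1 E)).card = E.card + 2 := by
    rw [Finset.card_insert_of_notMem h0, Finset.card_insert_of_notMem h1]
  set x := (insert 0 (insert 1 E)).orderEmbOfFin hcard
  have hrange : Set.range x = insert 0 (insert 1 (E : Set ℝ)) := by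
    simp [x, Finset.range_orderEmbOfFin]
  have hIcc (j) : x j ∈ Set.Icc 0 1 := by
    have hj : x j ∈ insert 0 (insert 1 (E : Set ℝ)) := hrange ▸ Set.mem_range_self j
    rcases hj with hj | hj | hj
    · simp [hj]
    · simp [hj]
    · exact Set.Ioo_subset_Icc_self (hE hj)
  obtain ⟨i₀, hi₀⟩ : 0 ∈ Set.range x := by simp [hrange]
  obtain ⟨i₁, hi₁⟩ : 1 ∈ Set.range x := by simp [hrange]
  exact ⟨x, ⟨x.monotone, ((x.monotone (Fin.zero_le i₀)).trans_eq hi₀).antisymm (hIcc 0).1,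
    (hIcc _).2.antisymm (hi₁.symm.trans_le (x.monotone (Fin.le_last i₁)))⟩, hrange⟩

variable {N : ℕ} {x : Fin (N + 2) → ℝ}

lemma exists_mem_Ioo_of_notMem_range (hx : x ∈ cutPoints N) {z : ℝ} (hz : z ∈ Set.Icc 0 1)
    (hzx : z ∉ Set.range x) : ∃ j : Fin (N + 1), z ∈ Set.Ioo (x j.castSucc) (x j.succ) := by
  have hne (j) : x j ≠ z := fun h ↦ hzx ⟨j, h⟩
  by_contra! hcon
  have hlt : ∀ j, x j < z := fun j ↦ by
    induction j using Fin.induction with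
    | zero => exact (hx.2.1.trans_le hz.1).lt_of_ne (hne 0)
    | succ j ih => exact (not_lt.1 fun h ↦ hcon j ⟨ih, h⟩).lt_of_ne (hne j.succ)
  exact (hlt (Fin.last _)).not_ge (hz.2.trans_eq hx.2.2.symm)

lemma disjoint_Ioo_range (hx : Monotone x) (j : Fin (N + 1)) :
    Disjoint (Set.Ioo (x j.castSucc) (x j.succ)) (Set.range x) := by
  rw [Set.disjoint_right]
  rintro _ ⟨k, rfl⟩ ⟨hj, hk⟩
  exact (Fin.castSucc_lt_iff_succ_le.1 (hx.reflect_lt hj)).not_gt (hx.reflect_lt hk)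

lemma exists_achievableWithCuts_ae_eq {A : Set ℝ} {E : Finset ℝ}
    (hE : frontier A ∩ Set.Ioo 0 1 ⊆ E) :
    ∃ m ≤ E.card, ∃ B, AchievableWithCuts m B ∧ ∀ (μ : Measure ℝ) [NullSingletonClass μ],
      μ (Set.Icc 0 1)ᶜ = 0 → B =ᵐ[μ] A := by
  classical
  set E' := {z ∈ E | z ∈ Set.Ioo (0 : ℝ) 1}
  obtain ⟨x, hx, hrange⟩ := exists_mem_cutPoints_range_eq (E := E') fun z hz ↦
    (Finset.mem_filter.1 hz).2
  have hgap (j : Fin (E'.card + 1)) : Set.Ioo (x j.castSucc) (x j.succ) ⊆ A ∨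
      Disjoint (Set.Ioo (x j.castSucc) (x j.succ)) A := by
    refine subset_or_disjoint_of_disjoint_frontier isPreconnected_Ioo
      (Set.disjoint_left.2 fun z hz hzA ↦ Set.disjoint_left.1 (disjoint_Ioo_range hx.1 j) hz ?_)
    have hz01 : z ∈ Set.Ioo 0 1 := Set.Ioo_subset_Ioo (mem_Icc_of_mem_cutPoints hx _).1
      (mem_Icc_of_mem_cutPoints hx _).2 hz
    rw [hrange]
    exact .inr (.inr (Finset.mem_filter.2 ⟨hE ⟨hzA, hz01⟩, hz01⟩))
  let S : Finset (Fin (E'.card + 1)) := {j | Set.Ioo (x j.castSucc) (x j.succ) ⊆ A}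
  have hS (j) : j ∈ S ↔ Set.Ioo (x j.castSucc) (x j.succ) ⊆ A := Finset.mem_filter_univ j
  refine ⟨E'.card, Finset.card_filter_le _ _, _, ⟨x, hx.1, hx.2.1, hx.2.2, S, rfl⟩,
    fun μ _ hμ ↦ ?_⟩
  have hrange_null : ∀ᵐ z ∂μ, z ∉ Set.range x :=
    measure_eq_zero_iff_ae_notMem.1 ((Set.finite_range x).measure_zero μ)
  filter_upwards [hrange_null, (show ∀ᵐ z ∂μ, z ∈ Set.Icc (0 : ℝ) 1 from hμ)] with z hzx hz
  refine propext ⟨fun hzB ↦ ?_, fun hzA ↦ ?_⟩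
  · obtain ⟨j, hj, hzj⟩ := Set.mem_iUnion₂.1 hzB
    exact (hS j).1 hj
      ⟨hzj.1.lt_of_ne fun h ↦ hzx ⟨_, h⟩, hzj.2.lt_of_ne fun h ↦ hzx ⟨_, h.symm⟩⟩
  · obtain ⟨j, hzj⟩ := exists_mem_Ioo_of_notMem_range hx hz hzx
    have hj := (hgap j).resolve_right (Set.not_disjoint_iff.2 ⟨z, hzj, hzA⟩)
    exact Set.mem_iUnion₂.2 ⟨j, (hS j).2 hj, Set.Ioo_subset_Icc_self hzj⟩

end Achievable

section StepMeasure

variable {μ : Measure ℝ}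

lemma nullSingletonClass_of_isStepMeasure (h : IsStepMeasure μ) : NullSingletonClass μ := by
  obtain ⟨-, n, a, b, c, -, rfl⟩ := h
  infer_instance

lemma measure_compl_Icc_of_isStepMeasure (h : IsStepMeasure μ) : μ (Set.Icc 0 1)ᶜ = 0 := by
  obtain ⟨-, n, a, b, c, hab, rfl⟩ := h
  rw [withDensity_apply _ measurableSet_Icc.compl]
  refine setLIntegral_eq_zero measurableSet_Icc.compl fun x hx ↦ ?_
  refine Finset.sum_eq_zero fun i _ ↦ Set.indicator_of_notMem (fun hxi ↦ hx ?_) _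
  exact ⟨(hab i).1.trans hxi.1, hxi.2.le.trans (hab i).2⟩

end StepMeasure

end

end NecklaceSplitting

theorem icd_upper_bound_rational_general (α : ℚ) (h0 : 0 ≤ α) (h1 : α ≤ 1) :
    ∃ c : ℝ, 0 < c ∧
      ∀ (n : ℕ) (μ : Fin n → Measure ℝ) [∀ i, IsFiniteMeasure (μ i)]
        [∀ i, NullSingletonClass (μ i)], (∀ i, μ i (Set.Icc 0 1)ᶜ = 0) →
          ∃ (m : ℕ) (A : Set ℝ),
            (m : ℝ) ≤ (2 - c) * (n : ℝ) ∧
            AchievableWithCuts m A ∧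
            ∀ i, μ i A = ENNReal.ofReal (α : ℝ) * μ i Set.univ := by
  obtain ⟨c, hc, h⟩ := NecklaceSplitting.GoodRatio.ratCast h0 h1
  refine ⟨c, hc, fun n μ _ _ hμ ↦ ?_⟩
  obtain ⟨A, E, -, hE, hcard, hAα⟩ := h n μ hμ
  obtain ⟨m, hm, B, hB, hBA⟩ := NecklaceSplitting.exists_achievableWithCuts_ae_eq hE
  refine ⟨m, B, (Nat.cast_le.2 hm).trans hcard, hB, fun i ↦ ?_⟩
  rw [measure_congr (hBA (μ i) (hμ i)), ← ofReal_measureReal, hAα,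
    ENNReal.ofReal_mul (Rat.cast_nonneg.2 h0), ofReal_measureReal]

/-- For every rational `α ∈ (0,1)` there is a constant `c > 0`
(depending only on `α`) such that for every `n ≥ 1` and all step-function probability
measures `μ_1, ..., μ_n` on `[0,1]`, a set achievable with at most `(2 − c)·n` cuts
exists on which every measure takes value exactly `α`. -/
theorem icd_upper_bound_rational
    (α : ℚ) (h0 : 0 < α) (h1 : α < 1) :
    ∃ c : ℝ, 0 < c ∧
      ∀ (n : ℕ), 0 < n →
        ∀ μ : Fin n → Measure ℝ, (∀ i, IsStepMeasure (μ i)) →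
          ∃ (m : ℕ) (A : Set ℝ),
            (m : ℝ) ≤ (2 - c) * (n : ℝ) ∧
            AchievableWithCuts m A ∧
            ∀ i, μ i A = ENNReal.ofReal (α : ℝ) := by
  obtain ⟨c, hc, h⟩ := icd_upper_bound_rational_general α h0.le h1.le
  refine ⟨c, hc, fun n _ μ hμ ↦ ?_⟩
  have (i : Fin n) : IsProbabilityMeasure (μ i) := (hμ i).1
  have (i : Fin n) : NullSingletonClass (μ i) :=
    NecklaceSplitting.nullSingletonClass_of_isStepMeasure (hμ i)
  simpa using h n μ fun i ↦
    NecklaceSplitting.measure_compl_Icc_of_isStepMeasure (hμ i)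
end

section
/- Let p be a prime and let l be an integer with 1 ≤ l ≤ p − 1. If the rational l/p belongs to Q*, then l = 1 or l = p − 1. -/
/-!
If `r ∤ q.num`, then `q / r` is already in lowest terms, with denominator `q.den * r`. So when that
denominator is prime, `q` is an integer, and since `Q* ⊆ [0, 1]` and `r ∤ q.num`, it is `1`. Hence
the last step producing an element of `Q*` with prime denominator `p` gives `1 / p` or `1 - 1 / p`.
-/

/-- `Q*` is the smallest subset of `ℚ` containing `0` and `1` and such that whenever
`q = l/k` (lowest terms) belongs to `Q*` and `p` is a prime not dividing the numerator
`l`, both `l/(k·p) = q/p` and `1 − q/p` belong to `Q*`. -/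
inductive QStar : ℚ → Prop
  | zero : QStar 0
  | one : QStar 1
  | div (q : ℚ) (p : ℕ) (hp : p.Prime) (hq : QStar q) (hnd : ¬ (p : ℤ) ∣ q.num) :
      QStar (q / (p : ℚ))
  | one_sub_div (q : ℚ) (p : ℕ) (hp : p.Prime) (hq : QStar q) (hnd : ¬ (p : ℤ) ∣ q.num) :
      QStar (1 - q / (p : ℚ))

theorem rat_den_div_natCast_of_coprime {q : ℚ} {n : ℕ} (hn : n ≠ 0)
    (hqn : q.num.natAbs.Coprime n) : (q / n).den = q.den * n := by
  rw [div_eq_mul_inv, Rat.mul_den, Rat.inv_natCast_num_of_pos hn.bot_lt,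
    Rat.inv_natCast_den_of_pos hn.bot_lt, mul_one,
    (q.reduced.mul_right hqn).gcd_eq_one, Nat.div_one]

namespace QStar

theorem mem_Icc {q : ℚ} (hq : QStar q) : q ∈ Set.Icc (0 : ℚ) 1 := by
  have div_mem {q : ℚ} {r : ℕ} (hr : r.Prime) (hq : q ∈ Set.Icc (0 : ℚ) 1) :
      q / r ∈ Set.Icc (0 : ℚ) 1 :=
    ⟨div_nonneg hq.1 r.cast_nonneg, (div_le_self hq.1 (mod_cast hr.one_le)).trans hq.2⟩
  induction hq with
  | zero => exact Set.left_mem_Icc.2 zero_le_one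
  | one => exact Set.right_mem_Icc.2 zero_le_one
  | div q r hr _ _ ih => exact div_mem hr ih
  | one_sub_div q r hr _ _ ih => exact Set.Icc.one_sub_mem (div_mem hr ih)

theorem eq_zero_or_eq_one_of_den_eq_one {q : ℚ} (hq : QStar q) (hden : q.den = 1) :
    q = 0 ∨ q = 1 := by
  lift q to ℤ using hden
  have h0 : 0 ≤ q := mod_cast hq.mem_Icc.1
  have h1 : q ≤ 1 := mod_cast hq.mem_Icc.2
  norm_cast
  omega

theorem eq_one_of_prime_den_div {q : ℚ} {r : ℕ} (hq : QStar q) (hr : r.Prime)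
    (hrq : ¬(r : ℤ) ∣ q.num) (hden : (q / r).den.Prime) : q = 1 := by
  have hcop : q.num.natAbs.Coprime r :=
    (hr.coprime_iff_not_dvd.2 (Int.natCast_dvd.not.1 hrq)).symm
  rw [rat_den_div_natCast_of_coprime hr.ne_zero hcop] at hden
  have hint : q.den = 1 := ((Nat.prime_mul_iff.1 hden).resolve_left fun h => hr.ne_one h.2).2
  refine (hq.eq_zero_or_eq_one_of_den_eq_one hint).resolve_left ?_
  rintro rfl
  exact hrq (dvd_zero _)

theorem div_eq_one_div_den_of_prime_den {q : ℚ} {r : ℕ} (hq : QStar q) (hr : r.Prime)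
    (hrq : ¬(r : ℤ) ∣ q.num) (hden : (q / r).den.Prime) : q / r = 1 / (q / r).den := by
  obtain rfl := hq.eq_one_of_prime_den_div hr hrq hden
  simp only [one_div, Rat.inv_natCast_den_of_pos hr.pos]

theorem eq_one_div_or_eq_one_sub_one_div_of_prime_den {x : ℚ} (hx : QStar x)
    (hden : x.den.Prime) :
    x = 1 / x.den ∨ x = 1 - 1 / x.den := by
  cases hx with
  | zero => exact absurd hden Nat.not_prime_one
  | one => exact absurd hden Nat.not_prime_one
  | div q r hr hq hrq => exact .inl (hq.div_eq_one_div_den_of_prime_den hr hrq hden)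
  | one_sub_div q r hr hq hrq =>
    have hsub : (1 - q / r).den = (q / r).den := mod_cast Rat.natCast_sub_den 1 (q / r)
    rw [hsub] at hden ⊢
    exact .inr (congrArg (1 - ·) (hq.div_eq_one_div_den_of_prime_den hr hrq hden))

end QStar

/-- If `p` is prime, `1 ≤ l ≤ p − 1`, and `l/p ∈ Q*`, then `l = 1` or
`l = p − 1`. -/
theorem QStar_prime_denominator
    (p : ℕ) (hp : p.Prime) (l : ℕ) (hl : 1 ≤ l) (hlp : l ≤ p - 1)
    (h : QStar ((l : ℚ) / (p : ℚ))) :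
    l = 1 ∨ l = p - 1 := by
  have hp0 : (p : ℚ) ≠ 0 := mod_cast hp.ne_zero
  have hcop : l.Coprime p := (Nat.coprime_of_lt_prime (by omega) (by omega) hp).symm
  have hden : ((l : ℚ) / p).den = p := by
    simpa only [Rat.den_natCast, one_mul] using
      rat_den_div_natCast_of_coprime (q := l) hp.ne_zero hcop
  have hcases := h.eq_one_div_or_eq_one_sub_one_div_of_prime_den (hden.symm ▸ hp)
  rw [hden, one_sub_div hp0, div_left_inj' hp0, div_left_inj' hp0,
    ← Nat.cast_pred hp.pos] at hcases
  exact mod_cast hcases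
end

section
/- For every integer k ≥ 1, both 1/k and (k−1)/k belong to Q*. -/
/-! Dividing by an integer coprime to the numerator of `q` leaves that numerator unchanged, so the
closure rules iterate: `q / m` is reached from `q` through the prime factors of `m`, one at a time,
and taking the complement at the last prime reaches `1 - q / m`. No prime divides the
numerator of `1`. -/

theorem num_div_natCast_of_coprime {q : ℚ} {m : ℕ} (hm : m ≠ 0) (h : q.num.natAbs.Coprime m) :
    (q / m).num = q.num := by
  have hden : (0 : ℤ) < q.den * m := by positivity
  have hcop : q.num.natAbs.Coprime (q.den * m : ℤ).natAbs := by
    simpa only [Int.natAbs_mul, Int.natAbs_natCast] using q.reduced.mul_right h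
  calc (q / m).num = ((q.num : ℚ) / (q.den * m : ℤ)).num := by
        push_cast
        rw [← div_div, Rat.num_div_den]
    _ = q.num := Rat.num_div_eq_of_coprime hden hcop

theorem not_dvd_num_div_natCast_of_coprime_mul {q : ℚ} {p m : ℕ} (hp : p.Prime) (hm : m ≠ 0)
    (h : q.num.natAbs.Coprime (p * m)) : ¬ (p : ℤ) ∣ (q / m).num := by
  rw [num_div_natCast_of_coprime hm h.coprime_mul_left_right, Int.natCast_dvd,
    ← hp.coprime_iff_not_dvd]
  exact h.coprime_mul_right_right.symm

theorem QStar.div_natCast {q : ℚ} (hq : QStar q) {m : ℕ} (hm : m ≠ 0)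
    (h : q.num.natAbs.Coprime m) : QStar (q / m) := by
  induction m using induction_on_primes with
  | zero => exact absurd rfl hm
  | one => simpa only [Nat.cast_one, div_one] using hq
  | prime_mul p m hp ih =>
    have hm₀ : m ≠ 0 := right_ne_zero_of_mul hm
    have hqm : QStar (q / m) := ih hm₀ h.coprime_mul_left_right
    rw [Nat.cast_mul, mul_comm, ← div_div]
    exact hqm.div _ p hp (not_dvd_num_div_natCast_of_coprime_mul hp hm₀ h)

theorem QStar.one_sub_div_natCast {q : ℚ} (hq : QStar q) {m : ℕ} (hm : 1 < m)
    (h : q.num.natAbs.Coprime m) : QStar (1 - q / m) := by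
  obtain ⟨p, hp, n, rfl⟩ := Nat.exists_prime_and_dvd hm.ne'
  have hn : n ≠ 0 := right_ne_zero_of_mul (Nat.ne_zero_of_lt hm)
  have hqn : QStar (q / n) := hq.div_natCast hn h.coprime_mul_left_right
  rw [Nat.cast_mul, mul_comm, ← div_div]
  exact hqn.one_sub_div _ p hp (not_dvd_num_div_natCast_of_coprime_mul hp hn h)

/-- For every integer `k ≥ 1`, both `1/k` and `(k−1)/k` belong
to `Q*`. -/
theorem QStar_one_div_and_compl (k : ℕ) (hk : 1 ≤ k) :
    QStar (1 / (k : ℚ)) ∧ QStar (((k : ℚ) - 1) / (k : ℚ)) := by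
  have hk₀ : k ≠ 0 := Nat.one_le_iff_ne_zero.mp hk
  have hcop : (1 : ℚ).num.natAbs.Coprime k := Nat.coprime_one_left k
  refine ⟨QStar.one.div_natCast hk₀ hcop, ?_⟩
  rw [sub_div, div_self (Nat.cast_ne_zero.mpr hk₀)]
  obtain rfl | hk₁ := hk.eq_or_lt
  · simpa only [Nat.cast_one, div_one, sub_self] using QStar.zero
  · exact QStar.one.one_sub_div_natCast hk₁ hcop
end

section
/- Define f : ℚ → ℚ as follows: for a rational α ∈ (0,1) written in lowest terms as l/k (with 1 ≤ l < k), set f(α) = (k mod l)/k; set f(α) = α for all other rationals. Then for every rational α ∈ (0,1) with reduced numerator l, there exists a natural number j ≤ l such that the j-th iterate f^[j](α) belongs to Q*. -/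
/-- The recursion map of Case 2 of the upper-bound proof: for `α ∈ (0,1)` written in
lowest terms as `l/k`, `f(α) = (k mod l)/k`; all other rationals are fixed. -/
def caseTwoStep (α : ℚ) : ℚ :=
  if 0 < α ∧ α < 1 then (((α.den : ℤ) % α.num : ℤ) : ℚ) / (α.den : ℚ) else α

lemma num_intCast_div_intCast_le {n : ℤ} (hn : 0 ≤ n) (d : ℤ) : ((n : ℚ) / d).num ≤ n := by
  obtain rfl | hd := eq_or_ne d 0
  · simpa using hn
  obtain rfl | hn := hn.eq_or_lt
  · simp
  · have num_dvd : ((n : ℚ) / d).num ∣ n := by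
      simpa only [Rat.divInt_eq_div] using Rat.num_dvd n hd
    exact Int.le_of_dvd hn num_dvd

lemma caseTwoStep_zero : caseTwoStep 0 = 0 := by
  simp [caseTwoStep]

lemma caseTwoStep_of_mem_Ioo {α : ℚ} (hα : α ∈ Set.Ioo 0 1) :
    caseTwoStep α = ((α.den % α.num : ℤ) : ℚ) / α.den :=
  if_pos hα

lemma num_caseTwoStep_lt {α : ℚ} (hα : α ∈ Set.Ioo 0 1) : (caseTwoStep α).num < α.num := by
  have num_pos : 0 < α.num := Rat.num_pos.mpr hα.1
  rw [caseTwoStep_of_mem_Ioo hα]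
  calc (((α.den % α.num : ℤ) : ℚ) / α.den).num
      ≤ α.den % α.num := num_intCast_div_intCast_le (Int.emod_nonneg _ num_pos.ne') α.den
    _ < α.num := Int.emod_lt_of_pos _ num_pos

lemma mapsTo_caseTwoStep_Ico : Set.MapsTo caseTwoStep (Set.Ico 0 1) (Set.Ico 0 1) := by
  rintro α ⟨nonneg, lt_one⟩
  obtain rfl | pos := nonneg.eq_or_lt
  · simp [caseTwoStep_zero]
  have num_pos : 0 < α.num := Rat.num_pos.mpr pos
  have den_pos : (0 : ℚ) < α.den := mod_cast α.den_pos
  have emod_nonneg : 0 ≤ (α.den : ℤ) % α.num := Int.emod_nonneg _ num_pos.ne'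
  have emod_lt_den : (α.den : ℤ) % α.num < α.den :=
    (Int.emod_lt_of_pos _ num_pos).trans (Rat.num_lt_denom_iff.mpr lt_one)
  rw [caseTwoStep_of_mem_Ioo ⟨pos, lt_one⟩]
  exact ⟨div_nonneg (mod_cast emod_nonneg) den_pos.le,
    (div_lt_one den_pos).mpr (mod_cast emod_lt_den)⟩

lemma iterate_caseTwoStep_eq_zero {α : ℚ} (hα : α ∈ Set.Ico 0 1) {n : ℕ} (hn : α.num ≤ n) :
    caseTwoStep^[n] α = 0 := by
  induction n generalizing α with
  | zero => exact le_antisymm (Rat.num_nonpos.mp (mod_cast hn)) hα.1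
  | succ n ih =>
    obtain rfl | pos := hα.1.eq_or_lt
    · exact Function.iterate_fixed caseTwoStep_zero (n + 1)
    · have num_lt : (caseTwoStep α).num < α.num := num_caseTwoStep_lt ⟨pos, hα.2⟩
      rw [Function.iterate_succ_apply]
      exact ih (mapsTo_caseTwoStep_Ico hα) (by lia)

/-- For every rational `α ∈ (0,1)` with reduced numerator `l`, some
iterate `f^[j](α)` with `j ≤ l` belongs to `Q*`. -/
theorem caseTwoStep_reaches_QStar
    (α : ℚ) (h0 : 0 < α) (h1 : α < 1) :
    ∃ j : ℕ, (j : ℤ) ≤ α.num ∧ QStar (caseTwoStep^[j] α) := by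
  refine ⟨α.num.toNat, (Int.toNat_of_nonneg (Rat.num_nonneg.mpr h0.le)).le, ?_⟩
  rw [iterate_caseTwoStep_eq_zero ⟨h0.le, h1⟩ (Int.self_le_toNat α.num)]
  exact QStar.zero
end
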